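/- Let C be a compact strictly convex planar body whose boundary is traced by a C^∞, λ-periodic, affinely parametrized curve x with affine curvature k. For each n ≥ 3, let 0 ≤ s_{n,1} < … < s_{n,n} < λ be parameters of the vertices of a best approximating inscribed polygon with at most n vertices, indices extended cyclically by s_{n,i+n} = s_{n,i} + λ, and set λ_{n,i} := s_{n,i} − s_{n,i−1}. Then λ_{n,i} = λ/n − (λ²/(30 n³))·∫₀^λ k(s) ds + (λ³/(30 n³))·k(s_{n,i}) + o(1/n³) uniformly in i; that is, lim_{n→∞} max_{1 ≤ i ≤ n} n³ · | λ_{n,i} − λ/n + (λ²/(30 n³))∫₀^λ k(s) ds − (λ³/(30 n³)) k(s_{n,i}) | = 0. -/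

import Mathlib

open Filter MeasureTheory
open scoped Topology

/-- The standard area form on the plane: `ω(u,v) = u₁v₂ − u₂v₁`. -/
noncomputable def om (u v : ℝ × ℝ) : ℝ := u.1 * v.2 - u.2 * v.1

open Asymptotics Set

/-!
If `s_i` are the vertex parameters of an optimal polygon, moving one vertex changes its area only
through a triangle, so the tangent at each vertex is parallel to the chord joining the two
neighbouring vertices: `ω(x'(s_i), x(s_{i+1}) - x(s_{i-1})) = 0`. The structure equations of the
affine arc length turn this, for consecutive gaps `a = s_{i+1} - s_i` and `b = s_i - s_{i-1}`, into
`(a² - b²) / 2 - k (a⁴ - b⁴) / 24 - k' (a⁵ + b⁵) / 60 = O(a⁶ + b⁶)`.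

Optimality forces all gaps to tend to zero. Dividing the relation by `a + b` then shows first that
`a - b` is of third order, so that all gaps are `H + O(H³)` with `H = λ / n`, and, inserting this
once more, that `a - b = k' H⁴ / 30 + O(H⁵)`. Hence `gap - H³ k / 30` is constant up to `O(H⁴)`
along the `n` vertices, and the constant is found by summing over the whole curve.
-/

section AreaForm

lemma om_self (u : ℝ × ℝ) : om u u = 0 := by
  simp only [om]; ring

lemma om_sub_right (u v w : ℝ × ℝ) : om u (v - w) = om u v - om u w := by
  simp only [om, Prod.fst_sub, Prod.snd_sub]; ring

lemma om_add_right (u v w : ℝ × ℝ) : om u (v + w) = om u v + om u w := by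
  simp only [om, Prod.fst_add, Prod.snd_add]; ring

lemma om_smul_right (c : ℝ) (u v : ℝ × ℝ) : om u (c • v) = c * om u v := by
  simp only [om, Prod.smul_fst, Prod.smul_snd, smul_eq_mul]; ring

lemma abs_om_le (u v : ℝ × ℝ) : |om u v| ≤ 2 * ‖u‖ * ‖v‖ := by
  have h₁ : |u.1 * v.2| ≤ ‖u‖ * ‖v‖ := by
    rw [abs_mul]; exact mul_le_mul (norm_fst_le u) (norm_snd_le v) (abs_nonneg _) (norm_nonneg _)
  have h₂ : |u.2 * v.1| ≤ ‖u‖ * ‖v‖ := by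
    rw [abs_mul]; exact mul_le_mul (norm_snd_le u) (norm_fst_le v) (abs_nonneg _) (norm_nonneg _)
  calc |om u v| ≤ |u.1 * v.2| + |u.2 * v.1| := abs_sub _ _
    _ ≤ 2 * ‖u‖ * ‖v‖ := by linarith

lemma hasDerivAt_om {f g : ℝ → ℝ × ℝ} {f' g' : ℝ × ℝ} {t : ℝ} (hf : HasDerivAt f f' t)
    (hg : HasDerivAt g g' t) :
    HasDerivAt (fun t => om (f t) (g t)) (om f' (g t) + om (f t) g') t := by
  have hfst {f : ℝ → ℝ × ℝ} {f'} (h : HasDerivAt f f' t) :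
      HasDerivAt (fun t => (f t).1) f'.1 t := h.fst
  have hsnd {f : ℝ → ℝ × ℝ} {f'} (h : HasDerivAt f f' t) :
      HasDerivAt (fun t => (f t).2) f'.2 t := h.snd
  refine (((hfst hf).mul (hsnd hg)).sub ((hsnd hf).mul (hfst hg))).congr_deriv ?_
  simp only [om]; ring

end AreaForm

/-- Twice the signed area of the triangle `a b c`, positive when `a, b, c` are in counterclockwise
order. -/
noncomputable def triangleDet (a b c : ℝ × ℝ) : ℝ := om (b - a) (c - a)

section TriangleDet

variable {a b c : ℝ × ℝ}

lemma triangleDet_rotate (a b c : ℝ × ℝ) : triangleDet b c a = triangleDet a b c := by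
  simp only [triangleDet, om, Prod.fst_sub, Prod.snd_sub]; ring

lemma triangleDet_swap (a b c : ℝ × ℝ) : triangleDet b a c = -triangleDet a b c := by
  simp only [triangleDet, om, Prod.fst_sub, Prod.snd_sub]; ring

lemma triangleDet_add_smul {α β : ℝ} (h : α + β = 1) (a b v w : ℝ × ℝ) :
    triangleDet a b (α • v + β • w) = α * triangleDet a b v + β * triangleDet a b w := by
  obtain rfl : α = 1 - β := eq_sub_of_add_eq h
  simp only [triangleDet, om, Prod.fst_sub, Prod.snd_sub, Prod.fst_add, Prod.snd_add, Prod.smul_fst,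
    Prod.smul_snd, smul_eq_mul]
  ring

lemma convex_setOf_triangleDet_nonneg (a b : ℝ × ℝ) : Convex ℝ {v | 0 ≤ triangleDet a b v} := by
  intro v hv w hw α β hα hβ h
  rw [mem_ofPred_eq, triangleDet_add_smul h]
  exact add_nonneg (mul_nonneg hα hv) (mul_nonneg hβ hw)

lemma volume_setOf_triangleDet_eq_zero (h : triangleDet a b c ≠ 0) :
    volume {v | triangleDet a b v = 0} = 0 := by
  let f : (ℝ × ℝ) →ₗ[ℝ] ℝ :=
    { toFun := om (b - a)
      map_add' := om_add_right _
      map_smul' := fun r v => om_smul_right r _ v }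
  have hline : {v | triangleDet a b v = 0} = AffineSubspace.mk' a (LinearMap.ker f) := by
    ext v
    simp [AffineSubspace.mem_mk', f, triangleDet]
  rw [hline]
  refine Measure.addHaar_affineSubspace _ _ fun htop => h ?_
  have hc : c ∈ {v | triangleDet a b v = 0} := by
    rw [hline, htop]
    exact AffineSubspace.mem_top ℝ _ c
  exact hc

end TriangleDet

/-- The area of the convex hull of `V`. -/
noncomputable def hullArea (V : Set (ℝ × ℝ)) : ℝ := (volume (convexHull ℝ V)).toReal

section HullArea

lemma segment_subset_union_of_mem {𝕜 E : Type*} [Field 𝕜] [LinearOrder 𝕜] [IsStrictOrderedRing 𝕜]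
    [AddCommGroup E] [Module 𝕜 E] {p v q : E} (hq : q ∈ segment 𝕜 p v) :
    segment 𝕜 p v ⊆ segment 𝕜 p q ∪ segment 𝕜 q v := by
  rw [segment_eq_image_lineMap] at hq ⊢
  obtain ⟨r, ⟨hr₀, hr₁⟩, rfl⟩ := hq
  rintro _ ⟨t, ⟨ht₀, ht₁⟩, rfl⟩
  have himage (α β : 𝕜) := image_segment 𝕜 (AffineMap.lineMap (k := 𝕜) p v) α β
  have hleft := himage 0 r
  have hright := himage r 1
  rw [AffineMap.lineMap_apply_zero, segment_eq_Icc hr₀] at hleft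
  rw [AffineMap.lineMap_apply_one, segment_eq_Icc hr₁] at hright
  rw [← hleft, ← hright]
  exact (le_total t r).imp (fun h => mem_image_of_mem _ ⟨ht₀, h⟩)
    fun h => mem_image_of_mem _ ⟨h, ht₁⟩

/-- A new vertex `p` from which the hull is seen through the side `a b` only adds the triangle
`a b p`. -/
lemma convexHull_insert_eq_union {𝕜 E : Type*} [Field 𝕜] [LinearOrder 𝕜] [IsStrictOrderedRing 𝕜]
    [AddCommGroup E] [Module 𝕜 E] {V : Set E} {a b p : E} (ha : a ∈ V) (hb : b ∈ V)
    (hside : ∀ v ∈ convexHull 𝕜 V, (segment 𝕜 p v ∩ segment 𝕜 a b).Nonempty) :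
    convexHull 𝕜 (insert p V) = convexHull 𝕜 V ∪ convexHull 𝕜 {a, b, p} := by
  apply subset_antisymm
  · intro y hy
    rw [convexHull_insert ⟨a, ha⟩, convexJoin_singleton_left, mem_iUnion₂] at hy
    obtain ⟨v, hv, hyv⟩ := hy
    obtain ⟨q, hqv, hqab⟩ := hside v hv
    have hq : q ∈ convexHull 𝕜 V ∩ convexHull 𝕜 {a, b, p} := by
      rw [← convexHull_pair] at hqab
      exact ⟨convexHull_mono (pair_subset ha hb) hqab,
        convexHull_mono (by grind) hqab⟩
    rcases segment_subset_union_of_mem hqv hyv with hpq | hqv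
    · right
      exact (convex_convexHull 𝕜 _).segment_subset (subset_convexHull 𝕜 _ (by simp)) hq.2 hpq
    · left
      exact (convex_convexHull 𝕜 _).segment_subset hq.1 hv hqv
  · exact union_subset (convexHull_mono (subset_insert p V))
      (convexHull_mono (insert_subset (mem_insert_of_mem p ha)
        (pair_subset (mem_insert_of_mem p hb) (mem_insert p V))))

lemma segment_inter_segment_nonempty {a b p v : ℝ × ℝ} (hp : 0 < triangleDet a p b)
    (hab : 0 ≤ triangleDet a b v) (hap : 0 ≤ triangleDet a p v) (hpb : 0 ≤ triangleDet p b v) :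
    (segment ℝ p v ∩ segment ℝ a b).Nonempty := by
  -- In barycentric coordinates `v = α a + β b - γ p`, so `(v + γ p) / (1 + γ)` is a common point.
  set D := triangleDet a p b with hD
  set α := triangleDet p b v / D with hα
  set β := triangleDet a p v / D with hβ
  set γ := triangleDet a b v / D with hγ
  have hα₀ : 0 ≤ α := div_nonneg hpb hp.le
  have hβ₀ : 0 ≤ β := div_nonneg hap hp.le
  have hγ₀ : 0 ≤ γ := div_nonneg hab hp.le
  have hsum : α + β = 1 + γ := by
    have hdet : triangleDet p b v + triangleDet a p v = D + triangleDet a b v := by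
      simp only [hD, triangleDet, om, Prod.fst_sub, Prod.snd_sub]; ring
    rw [hα, hβ, hγ, ← add_div, hdet, add_div, div_self hp.ne']
  have hv : v + γ • p = α • a + β • b := by
    have hdet : D • v + triangleDet a b v • p = triangleDet p b v • a + triangleDet a p v • b := by
      ext <;> simp only [hD, triangleDet, om, Prod.fst_sub, Prod.snd_sub, Prod.fst_add,
        Prod.snd_add, Prod.smul_fst, Prod.smul_snd, smul_eq_mul] <;> ring
    rw [← smul_right_injective _ hp.ne' |>.eq_iff]
    simpa only [hα, hβ, hγ, smul_add, smul_smul, mul_div_cancel₀ _ hp.ne'] using hdet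
  have hpos : 0 < 1 + γ := by positivity
  refine ⟨(1 + γ)⁻¹ • (v + γ • p), ?_, ?_⟩
  · refine ⟨γ / (1 + γ), 1 / (1 + γ), by positivity, by positivity, by field_simp; ring, ?_⟩
    rw [smul_add, smul_smul, add_comm, div_eq_inv_mul, div_eq_inv_mul, mul_one]
  · refine ⟨α / (1 + γ), β / (1 + γ), div_nonneg hα₀ hpos.le, div_nonneg hβ₀ hpos.le, ?_, ?_⟩
    · rw [← add_div, hsum, div_self hpos.ne']
    · rw [hv, smul_add, smul_smul, smul_smul, div_eq_inv_mul, div_eq_inv_mul]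

lemma hullArea_union_of_triangleDet {V : Set (ℝ × ℝ)} {a b p : ℝ × ℝ} (hV : V.Finite) (ha : a ∈ V)
    (hb : b ∈ V) (hp : 0 < triangleDet a p b) (hab : ∀ v ∈ V, 0 ≤ triangleDet a b v)
    (hap : ∀ v ∈ V, 0 ≤ triangleDet a p v) (hpb : ∀ v ∈ V, 0 ≤ triangleDet p b v) :
    hullArea (insert p V) = hullArea V + hullArea {a, b, p} := by
  have hhull {c d : ℝ × ℝ} (h : ∀ v ∈ V, 0 ≤ triangleDet c d v) :=
    convexHull_min h (convex_setOf_triangleDet_nonneg c d)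
  have hpab : triangleDet a p b = triangleDet b a p := triangleDet_rotate b a p
  have hV' := hV.isCompact_convexHull (𝕜 := ℝ)
  have hT := (toFinite {a, b, p}).isCompact_convexHull (𝕜 := ℝ)
  have hTside : convexHull ℝ {a, b, p} ⊆ {v | 0 ≤ triangleDet b a v} := by
    refine convexHull_min ?_ (convex_setOf_triangleDet_nonneg b a)
    rintro v (rfl | rfl | rfl)
    · simp [triangleDet, om_self]
    · simp [triangleDet, om]
    · exact (hpab ▸ hp).le
  have hdisj : AEDisjoint volume (convexHull ℝ V) (convexHull ℝ {a, b, p}) := by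
    refine measure_mono_null ?_ (volume_setOf_triangleDet_eq_zero (hpab ▸ hp.ne'))
    rintro v ⟨hvV, hvT⟩
    have hvT' : 0 ≤ triangleDet b a v := hTside hvT
    have hvV' : 0 ≤ triangleDet a b v := hhull hab hvV
    rw [triangleDet_swap] at hvV'
    exact le_antisymm (neg_nonneg.mp hvV') hvT'
  simp only [hullArea]
  rw [convexHull_insert_eq_union ha hb fun v hv =>
      segment_inter_segment_nonempty hp (hhull hab hv) (hhull hap hv) (hhull hpb hv),
    measure_union₀ hT.isClosed.measurableSet.nullMeasurableSet hdisj,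
    ENNReal.toReal_add hV'.measure_lt_top.ne hT.measure_lt_top.ne]

lemma hullArea_triple_eq_abs_mul (a b p : ℝ × ℝ) :
    hullArea {a, b, p} = |triangleDet a b p| * hullArea {(0, 0), (1, 0), (0, 1)} := by
  let L : (ℝ × ℝ) →ₗ[ℝ] (ℝ × ℝ) := Matrix.toLin (.finTwoProd ℝ) (.finTwoProd ℝ)
    !![(b - a).1, (p - a).1; (b - a).2, (p - a).2]
  have hdet : LinearMap.det L = triangleDet a b p := by
    rw [LinearMap.det_toLin, Matrix.det_fin_two_of, triangleDet, om]; ring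
  have himage : convexHull ℝ {a, b, p} =
      (a + ·) '' (L '' convexHull ℝ {(0, 0), (1, 0), (0, 1)}) := by
    have hadd : (a + ·) = (AffineEquiv.constVAdd ℝ (ℝ × ℝ) a).toAffineMap := by ext <;> simp
    rw [LinearMap.image_convexHull, hadd, AffineMap.image_convexHull]
    have hsub (v : ℝ × ℝ) : a + (v.1 - a.1, v.2 - a.2) = v := add_sub_cancel a v
    simp [image_insert_eq, L, Matrix.toLin_finTwoProd_apply, hsub, ← Prod.zero_eq_mk]
  rw [hullArea, himage, image_add_left, measure_preimage_add, Measure.addHaar_image_linearMap, hdet,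
    ENNReal.toReal_mul, ENNReal.toReal_ofReal (abs_nonneg _), hullArea]

lemma hullArea_triple (a b p : ℝ × ℝ) : hullArea {a, b, p} = |triangleDet a b p| / 2 := by
  set c := hullArea {(0, 0), (1, 0), (0, 1)} with hc
  -- The unit square consists of two triangles of area `c`.
  have hsquare : hullArea {(1, 1), (0, 0), (1, 0), (0, 1)} = 1 := by
    have hprod : ({(1, 1), (0, 0), (1, 0), (0, 1)} : Set (ℝ × ℝ)) = {0, 1} ×ˢ {0, 1} := by
      ext ⟨u, v⟩
      simp only [mem_insert_iff, mem_singleton_iff, mem_prod, Prod.mk.injEq]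
      tauto
    rw [hullArea, hprod, convexHull_prod, convexHull_pair, segment_eq_Icc zero_le_one,
      Measure.volume_eq_prod, Measure.prod_prod, Real.volume_Icc]
    norm_num
  have hinsert : hullArea {(1, 1), (0, 0), (1, 0), (0, 1)} =
      hullArea {(0, 0), (1, 0), (0, 1)} + hullArea {(1, 0), (0, 1), (1, 1)} := by
    refine hullArea_union_of_triangleDet (toFinite _) ?_ ?_ ?_ ?_ ?_ ?_ <;>
      simp [triangleDet, om]
  have hdet : |triangleDet (1, 0) (0, 1) (1, 1)| = 1 := by simp [triangleDet, om]
  rw [hsquare, hullArea_triple_eq_abs_mul (1, 0), hdet, one_mul, ← hc] at hinsert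
  rw [hullArea_triple_eq_abs_mul, ← hc, show c = 1 / 2 by linarith, mul_one_div]

lemma hullArea_insert {V : Set (ℝ × ℝ)} {a b p : ℝ × ℝ} (hV : V.Finite) (ha : a ∈ V)
    (hb : b ∈ V) (hp : 0 < triangleDet a p b) (hab : ∀ v ∈ V, 0 ≤ triangleDet a b v)
    (hap : ∀ v ∈ V, 0 ≤ triangleDet a p v) (hpb : ∀ v ∈ V, 0 ≤ triangleDet p b v) :
    hullArea (insert p V) = hullArea V + triangleDet a p b / 2 := by
  rw [hullArea_union_of_triangleDet hV ha hb hp hab hap hpb, insert_comm a b, hullArea_triple,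
    ← triangleDet_rotate b, abs_of_pos hp]

end HullArea


/-- `x` runs once around a strictly convex loop with period `lam`, counterclockwise: any three
points taken in order within one period form a positively oriented triangle. -/
def IsConvexLoop (x : ℝ → ℝ × ℝ) (lam : ℝ) : Prop :=
  ∀ ⦃u v w⦄, u < v → v < w → w < u + lam → 0 < triangleDet (x u) (x v) (x w)

section Orientation

lemma collinear_of_triangleDet_eq_zero {a b c : ℝ × ℝ} (h : triangleDet a b c = 0) :
    Collinear ℝ {a, b, c} := by
  rcases eq_or_ne b a with rfl | hba
  · simpa using collinear_pair ℝ b c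
  · have hd : (b - a).1 * (b - a).1 + (b - a).2 * (b - a).2 ≠ 0 := fun hd =>
      hba (sub_eq_zero.mp (Prod.ext (mul_self_add_mul_self_eq_zero.mp hd).1
        (mul_self_add_mul_self_eq_zero.mp hd).2))
    set r := ((b - a).1 * (c - a).1 + (b - a).2 * (c - a).2) /
      ((b - a).1 * (b - a).1 + (b - a).2 * (b - a).2) with hr
    have hc : c = r • (b - a) + a := by
      simp only [triangleDet, om] at h
      rw [← sub_eq_iff_eq_add]
      ext <;> simp only [hr, Prod.smul_fst, Prod.smul_snd, smul_eq_mul] <;>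
        rw [div_mul_eq_mul_div, eq_div_iff hd]
      · linear_combination -(b - a).2 * h
      · linear_combination (b - a).1 * h
    refine (collinear_iff_of_mem (mem_insert a _)).mpr ⟨b - a, ?_⟩
    rintro p (rfl | rfl | rfl)
    · exact ⟨0, by simp⟩
    · exact ⟨1, by simp⟩
    · exact ⟨r, hc⟩

lemma not_collinear_of_mem_frontier {E : Type*} [NormedAddCommGroup E] [NormedSpace ℝ E]
    {C : Set E} (hC : StrictConvex ℝ C) (hclosed : IsClosed C) {a b c : E} (ha : a ∈ frontier C)
    (hb : b ∈ frontier C) (hc : c ∈ frontier C) (hab : a ≠ b) (hbc : b ≠ c) (hca : c ≠ a) :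
    ¬ Collinear ℝ {a, b, c} := by
  have hbtw {p q r : E} (hp : p ∈ frontier C) (hq : q ∈ frontier C) (hr : r ∈ frontier C)
      (hpq : p ≠ q) (hqr : q ≠ r) (hrp : r ≠ p) : ¬ Wbtw ℝ p q r := by
    intro h
    have hseg := (mem_segment_iff_wbtw.mpr h)
    have hopen := mem_openSegment_of_ne_left_right hpq hqr.symm hseg
    exact hq.2 (hC.openSegment_subset (hclosed.frontier_subset hp) (hclosed.frontier_subset hr)
      hrp.symm hopen)
  intro h
  rcases h.wbtw_or_wbtw_or_wbtw with h | h | h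
  · exact hbtw ha hb hc hab hbc hca h
  · exact hbtw hb hc ha hbc hca hab h
  · exact hbtw hc ha hb hca hab hbc h

lemma ne_of_injOn_Ico {α : Type*} {x : ℝ → α} {lam : ℝ} (hlam : 0 < lam)
    (hper : Function.Periodic x lam) (hinj : InjOn x (Ico 0 lam)) {u v : ℝ} (huv : u < v)
    (hvu : v < u + lam) : x u ≠ x v := by
  have hmod (t : ℝ) : x (toIcoMod hlam 0 t) = x t := hper.sub_zsmul_eq _
  have hmem (t : ℝ) : toIcoMod hlam 0 t ∈ Ico 0 lam := by simpa using toIcoMod_mem_Ico hlam 0 t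
  intro h
  have heq := hinj (hmem u) (hmem v) (by rw [hmod, hmod, h])
  obtain ⟨m, hm⟩ := (toIcoMod_eq_toIcoMod hlam).mp heq
  rw [zsmul_eq_mul] at hm
  have h₀ : (0 : ℝ) < m := pos_of_mul_pos_left (hm ▸ sub_pos.mpr huv) hlam.le
  have h₁ : (m : ℝ) < 1 := (mul_lt_iff_lt_one_left hlam).mp (by linarith)
  norm_cast at h₀ h₁
  lia

lemma eventually_pos_of_hasDerivAt {f : ℝ → ℝ} {f' u : ℝ} (hf : HasDerivAt f f' u) (hu : f u = 0)
    (hf' : 0 < f') : ∀ᶠ v in 𝓝[>] u, 0 < f v := by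
  have hsign := eventually_nhdsWithin_sign_eq_of_deriv_pos (hf.deriv.symm ▸ hf') hu
  filter_upwards [hsign.filter_mono nhdsWithin_le_nhds, self_mem_nhdsWithin] with v hv hvu
  rwa [sign_pos (sub_pos.mpr hvu), sign_eq_one_iff] at hv

lemma eventually_pos_of_deriv_pos {f f' : ℝ → ℝ} {u : ℝ} (hf : ∀ v, HasDerivAt f (f' v) v)
    (hu : f u = 0) (hf' : ∀ᶠ v in 𝓝[>] u, 0 < f' v) : ∀ᶠ v in 𝓝[>] u, 0 < f v := by
  obtain ⟨b, hub, hb⟩ := mem_nhdsGT_iff_exists_Ioo_subset.mp hf'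
  have hmono : StrictMonoOn f (Ico u b) := by
    refine strictMonoOn_of_deriv_pos (convex_Ico u b)
      (fun v _ => (hf v).continuousAt.continuousWithinAt) fun v hv => ?_
    rw [interior_Ico] at hv
    exact (hf v).deriv.symm ▸ hb hv
  filter_upwards [Ioo_mem_nhdsGT hub] with v hv
  exact hu ▸ hmono (left_mem_Ico.mpr hub) ⟨hv.1.le, hv.2⟩ hv.1

variable {x : ℝ → ℝ × ℝ} {lam : ℝ}

lemma exists_triangleDet_pos {x' x'' : ℝ → ℝ × ℝ} (hx : ∀ t, HasDerivAt x (x' t) t)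
    (hx' : ∀ t, HasDerivAt x' (x'' t) t) {u b : ℝ} (hcurv : 0 < om (x' u) (x'' u)) (hb : u < b) :
    ∃ v w, u < v ∧ v < w ∧ w < b ∧ 0 < triangleDet (x u) (x v) (x w) := by
  have hderiv (w : ℝ) : HasDerivAt (fun w => om (x' u) (x w - x u)) (om (x' u) (x' w)) w := by
    simpa [om] using hasDerivAt_om (hasDerivAt_const w (x' u)) ((hx w).sub_const (x u))
  have hderiv' : HasDerivAt (fun w => om (x' u) (x' w)) (om (x' u) (x'' u)) u := by
    simpa [om] using hasDerivAt_om (hasDerivAt_const u (x' u)) (hx' u)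
  have hchord := eventually_pos_of_deriv_pos hderiv (by simp [om])
    (eventually_pos_of_hasDerivAt hderiv' (om_self _) hcurv)
  obtain ⟨w, hw, huw, hwb⟩ := (hchord.and (Ioo_mem_nhdsGT hb)).exists
  have htri : HasDerivAt (fun v => triangleDet (x u) (x v) (x w)) (om (x' u) (x w - x u)) u := by
    simpa [om, triangleDet] using
      hasDerivAt_om ((hx u).sub_const (x u)) (hasDerivAt_const u (x w - x u))
  obtain ⟨v, hv, huv, hvw⟩ :=
    ((eventually_pos_of_hasDerivAt htri (by simp [triangleDet, om]) hw).and
      (Ioo_mem_nhdsGT huw)).exists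
  exact ⟨v, w, huv, hvw, hwb, hv⟩

lemma isConvexLoop_of_strictConvex {C : Set (ℝ × ℝ)} (hC : StrictConvex ℝ C) (hclosed : IsClosed C)
    {x' x'' : ℝ → ℝ × ℝ} (hx : ∀ t, HasDerivAt x (x' t) t) (hx' : ∀ t, HasDerivAt x' (x'' t) t)
    (hcurv : ∀ t, 0 < om (x' t) (x'' t)) (hfr : ∀ t, x t ∈ frontier C)
    (hne : ∀ ⦃u v⦄, u < v → v < u + lam → x u ≠ x v) : IsConvexLoop x lam := by
  intro u v w huv hvw hwu
  let S : Set (ℝ × ℝ) := {p | u < p.1} ∩ ({p | 0 < p.2 - p.1} ∩ {p | p.2 < u + lam})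
  have hS : IsPreconnected S :=
    (((convex_Ioi u).linear_preimage (LinearMap.fst ℝ ℝ ℝ)).inter
      (((convex_Ioi 0).linear_preimage (LinearMap.snd ℝ ℝ ℝ - LinearMap.fst ℝ ℝ ℝ)).inter
        ((convex_Iio (u + lam)).linear_preimage (LinearMap.snd ℝ ℝ ℝ)))).isPreconnected
  have hcont : ContinuousOn (fun p : ℝ × ℝ => triangleDet (x u) (x p.1) (x p.2)) S := by
    have hx : Continuous x := continuous_iff_continuousAt.mpr fun t => (hx t).continuousAt
    simp only [triangleDet, om]
    fun_prop
  have hzero : ∀ p ∈ S, triangleDet (x u) (x p.1) (x p.2) ≠ 0 := by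
    rintro ⟨v, w⟩ ⟨huv, hvw, hwu⟩ h
    simp only [mem_ofPred_eq, sub_pos] at huv hvw hwu h
    exact not_collinear_of_mem_frontier hC hclosed (hfr u) (hfr v) (hfr w)
      (hne huv (hvw.trans hwu)) (hne hvw (by linarith)) (hne (huv.trans hvw) hwu).symm
      (collinear_of_triangleDet_eq_zero h)
  obtain ⟨v₀, w₀, huv₀, hvw₀, hwu₀, hpos⟩ := exists_triangleDet_pos hx hx' (hcurv u)
    (huv.trans (hvw.trans hwu))
  by_contra! hneg
  obtain ⟨p, hpS, hp⟩ := hS.intermediate_value (a := (v, w)) (b := (v₀, w₀))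
    ⟨huv, sub_pos.mpr hvw, hwu⟩ ⟨huv₀, sub_pos.mpr hvw₀, hwu₀⟩ hcont ⟨hneg, hpos.le⟩
  exact hzero p hpS hp

end Orientation

section ConvexLoop

variable {x : ℝ → ℝ × ℝ} {lam : ℝ}

lemma triangleDet_nonneg_of_isConvexLoop (hx : IsConvexLoop x lam) (hper : Function.Periodic x lam)
    {u v w : ℝ} (huv : u ≤ v) (hvw : v ≤ w) (hwu : w ≤ u + lam) :
    0 ≤ triangleDet (x u) (x v) (x w) := by
  rcases huv.eq_or_lt with rfl | huv
  · simp [triangleDet, om]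
  rcases hvw.eq_or_lt with rfl | hvw
  · simp [triangleDet, om_self]
  rcases hwu.eq_or_lt with rfl | hwu
  · simp [hper u, triangleDet, om]
  exact (hx huv hvw hwu).le

lemma hullArea_insert_of_isConvexLoop (hx : IsConvexLoop x lam) (hper : Function.Periodic x lam)
    {u t w : ℝ} (hut : u < t) (htw : t < w) (hwu : w < u + lam) {V : Set (ℝ × ℝ)} (hV : V.Finite)
    (hVx : V ⊆ x '' Icc w (u + lam)) (hu : x u ∈ V) (hw : x w ∈ V) :
    hullArea (insert (x t) V) = hullArea V + triangleDet (x u) (x t) (x w) / 2 := by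
  refine hullArea_insert hV hu hw (hx hut htw hwu) ?_ ?_ ?_ <;> intro v hv <;>
    obtain ⟨r, ⟨hwr, hru⟩, rfl⟩ := hVx hv <;>
    exact triangleDet_nonneg_of_isConvexLoop hx hper (by linarith) (by linarith) (by linarith)

end ConvexLoop


/-- The parameter length `s i - s (i - 1)` of the `i`-th arc. -/
def gap (s : ℤ → ℝ) (i : ℤ) : ℝ := s i - s (i - 1)

/-- `s` cuts `ℝ / lam ℤ` into `n` arcs; the partition points are indexed cyclically by `ℤ`. -/
structure IsCyclicPartition (lam : ℝ) (n : ℕ) (s : ℤ → ℝ) : Prop where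
  strictMono : StrictMono s
  add_period : ∀ i, s (i + n) = s i + lam

/-- The points `x (s i)` are the vertices of an inscribed polygon of maximal area among those with
at most `n` vertices on the closed curve `x`. -/
structure IsBestInscribed (x : ℝ → ℝ × ℝ) (lam : ℝ) (n : ℕ) (s : ℤ → ℝ) : Prop extends
    IsCyclicPartition lam n s where
  hullArea_le : ∀ V ⊆ range x, V.Finite → V.ncard ≤ n → hullArea V ≤ hullArea (range (x ∘ s))

section Optimality

variable {x : ℝ → ℝ × ℝ} {lam : ℝ} {n : ℕ} {s : ℤ → ℝ}

lemma gap_pos (hs : StrictMono s) (i : ℤ) : 0 < gap s i := sub_pos.mpr (hs (sub_one_lt i))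

lemma sub_le_of_isCyclicPartition (hs : IsCyclicPartition lam n s) {i j : ℤ} (hij : j ≤ i + n) :
    s j - s i ≤ lam := by
  rw [sub_le_iff_le_add', ← hs.add_period]
  exact hs.strictMono.monotone hij

lemma gap_le_of_isCyclicPartition (hs : IsCyclicPartition lam n s) (hn : 0 < n) (i : ℤ) :
    gap s i ≤ lam :=
  sub_le_of_isCyclicPartition hs (by lia)

lemma periodic_comp_of_isCyclicPartition {α : Type*} {f : ℝ → α} (hs : IsCyclicPartition lam n s)
    (hf : Function.Periodic f lam) : Function.Periodic (f ∘ s) n := fun i => by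
  rw [Function.comp_apply, hs.add_period, hf]; rfl

lemma range_comp_subset_image_Icc (hs : IsCyclicPartition lam n s) (hper : Function.Periodic x lam)
    (hn : 0 < n) (i : ℤ) : range (x ∘ s) ⊆ x '' Icc (s i) (s (i - 1) + lam) := by
  rw [← (periodic_comp_of_isCyclicPartition hs hper).image_Ioc (by exact_mod_cast hn) (i - 1),
    ← hs.add_period, image_comp]
  gcongr
  rintro _ ⟨j, ⟨hij, hji⟩, rfl⟩
  exact ⟨hs.strictMono.monotone (by lia), hs.strictMono.monotone hji⟩

lemma insert_image_Ioo_eq_range (hs : IsCyclicPartition lam n s) (hper : Function.Periodic x lam)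
    (hn : 0 < n) (j : ℤ) : insert (x (s j)) ((x ∘ s) '' Ioo j (j + n)) = range (x ∘ s) := by
  have hperiodic := periodic_comp_of_isCyclicPartition hs hper
  rw [← hperiodic.image_Ioc (by exact_mod_cast hn) j, ← Ioo_insert_right (by lia : j < j + n),
    image_insert_eq, hperiodic j, Function.comp_apply]

lemma hullArea_insert_image_Ioo_le (hs : IsBestInscribed x lam n s) (hn : 0 < n) (j : ℤ) (t : ℝ) :
    hullArea (insert (x t) ((x ∘ s) '' Ioo j (j + n))) ≤ hullArea (range (x ∘ s)) := by
  have hfin := finite_Ioo j (j + n)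
  refine hs.hullArea_le _ (insert_subset (mem_range_self t) ?_) ((hfin.image _).insert _) ?_
  · exact (image_subset_range _ _).trans (range_comp_subset_range s x)
  · have hcard : (Ioo j (j + n)).ncard = n - 1 := by
      rw [← Finset.coe_Ioo, ncard_coe_finset, Int.card_Ioo]
      lia
    calc _ ≤ ((x ∘ s) '' Ioo j (j + n)).ncard + 1 := ncard_insert_le _ _
      _ ≤ (n - 1) + 1 := by grw [ncard_image_le hfin, hcard]
      _ = n := by lia

lemma hullArea_insert_image_Ioo (hx : IsConvexLoop x lam) (hper : Function.Periodic x lam)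
    (hs : IsCyclicPartition lam n s) (hn : 3 ≤ n) {j : ℤ} {t : ℝ}
    (ht : t ∈ Ioo (s (j - 1)) (s (j + 1))) :
    hullArea (insert (x t) ((x ∘ s) '' Ioo j (j + n))) = hullArea ((x ∘ s) '' Ioo j (j + n)) +
      triangleDet (x (s (j - 1))) (x t) (x (s (j + 1))) / 2 := by
  have hlt : s (j + 1) < s (j - 1) + lam := by
    rw [← hs.add_period]
    exact hs.strictMono (by lia)
  refine hullArea_insert_of_isConvexLoop hx hper ht.1 ht.2 hlt ((finite_Ioo _ _).image _) ?_
    ⟨j - 1 + n, ⟨by lia, by lia⟩, periodic_comp_of_isCyclicPartition hs hper (j - 1)⟩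
    ⟨j + 1, ⟨by lia, by lia⟩, rfl⟩
  rw [image_comp, ← hs.add_period]
  gcongr
  rintro _ ⟨m, ⟨hjm, hmj⟩, rfl⟩
  exact ⟨hs.strictMono.monotone (by lia), hs.strictMono.monotone (by lia)⟩

lemma hullArea_range_comp (hx : IsConvexLoop x lam) (hper : Function.Periodic x lam)
    (hs : IsCyclicPartition lam n s) (hn : 3 ≤ n) (j : ℤ) :
    hullArea (range (x ∘ s)) = hullArea ((x ∘ s) '' Ioo j (j + n)) +
      triangleDet (x (s (j - 1))) (x (s j)) (x (s (j + 1))) / 2 := by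
  rw [← insert_image_Ioo_eq_range hs hper (by lia) j, hullArea_insert_image_Ioo hx hper hs hn
    ⟨hs.strictMono (sub_one_lt j), hs.strictMono (lt_add_one j)⟩]

/-- Otherwise, moving the vertex `x (s j)` to `x t` would enlarge the polygon. -/
lemma triangleDet_le_triangleDet_of_mem_Ioo (hx : IsConvexLoop x lam)
    (hper : Function.Periodic x lam) (hs : IsBestInscribed x lam n s) (hn : 3 ≤ n) {i j : ℤ}
    {t : ℝ} (ht : t ∈ Ioo (s (i - 1)) (s i)) (hij : i < j) (hji : j < i - 1 + n) :
    triangleDet (x (s (i - 1))) (x t) (x (s i)) ≤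
      triangleDet (x (s (j - 1))) (x (s j)) (x (s (j + 1))) := by
  have hperiodic := periodic_comp_of_isCyclicPartition hs.toIsCyclicPartition hper
  have hlt : s i < s (i - 1) + lam := by
    rw [← hs.add_period]
    exact hs.strictMono (by lia)
  have hinsert := hullArea_insert_of_isConvexLoop hx hper ht.1 ht.2 hlt
    ((finite_Ioo j (j + n)).image (x ∘ s))
    ((image_subset_range _ _).trans
      (range_comp_subset_image_Icc hs.toIsCyclicPartition hper (by lia) i))
    ⟨i - 1 + n, ⟨by lia, by lia⟩, hperiodic (i - 1)⟩ ⟨i + n, ⟨by lia, by lia⟩, hperiodic i⟩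
  have hle := hullArea_insert_image_Ioo_le hs (by lia) j t
  rw [hinsert, hullArea_range_comp hx hper hs.toIsCyclicPartition hn j] at hle
  linarith

lemma om_deriv_chord_eq_zero (hx : IsConvexLoop x lam) (hper : Function.Periodic x lam)
    (hs : IsBestInscribed x lam n s) (hn : 3 ≤ n) {v : ℝ × ℝ} {j : ℤ} (hv : HasDerivAt x v (s j)) :
    om v (x (s (j + 1)) - x (s (j - 1))) = 0 := by
  have hmem : Ioo (s (j - 1)) (s (j + 1)) ∈ 𝓝 (s j) :=
    Ioo_mem_nhds (hs.strictMono (sub_one_lt j)) (hs.strictMono (lt_add_one j))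
  have hmax : IsLocalMax (fun t => triangleDet (x (s (j - 1))) (x t) (x (s (j + 1)))) (s j) := by
    filter_upwards [hmem] with t ht
    have hle := hullArea_insert_image_Ioo_le hs (by lia) j t
    rw [hullArea_insert_image_Ioo hx hper hs.toIsCyclicPartition hn ht,
      hullArea_range_comp hx hper hs.toIsCyclicPartition hn j] at hle
    linarith
  refine hmax.hasDerivAt_eq_zero ?_
  simpa [om, triangleDet] using hasDerivAt_om (hv.sub_const (x (s (j - 1))))
    (hasDerivAt_const (s j) (x (s (j + 1)) - x (s (j - 1))))

end Optimality


section GapsTendToZero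

open scoped NNReal

variable {x : ℝ → ℝ × ℝ} {lam : ℝ} {n : ℕ} {s : ℤ → ℝ} {K : ℝ≥0}

lemma sum_range_gap (s : ℤ → ℝ) (i : ℤ) (m : ℕ) :
    ∑ j ∈ Finset.range m, gap s (i + 1 + j) = s (i + m) - s i := by
  have h := Finset.sum_range_sub (fun j : ℕ => s (i + j)) m
  simp only [Nat.cast_zero, add_zero] at h
  rw [← h]
  refine Finset.sum_congr rfl fun j _ => ?_
  simp only [gap]
  congr 2 <;> push_cast <;> ring

lemma hullArea_le_of_subset_closedBall {V : Set (ℝ × ℝ)} {p : ℝ × ℝ} {r : ℝ} (hr : 0 ≤ r)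
    (hV : V ⊆ Metric.closedBall p r) : hullArea V ≤ (2 * r) ^ 2 := by
  have hball : volume (Metric.closedBall p r) = ENNReal.ofReal ((2 * r) ^ 2) := by
    rw [← Prod.mk.eta (p := p), ← closedBall_prod_same, Measure.volume_eq_prod, Measure.prod_prod,
      Real.volume_closedBall, Real.volume_closedBall, ← ENNReal.ofReal_mul (by positivity), sq]
  calc hullArea V ≤ (volume (Metric.closedBall p r)).toReal :=
        ENNReal.toReal_mono measure_closedBall_lt_top.ne
          (measure_mono (convexHull_min hV (convex_closedBall p r)))
    _ = (2 * r) ^ 2 := by rw [hball, ENNReal.toReal_ofReal (by positivity)]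

/-- A polygon with one long arc is confined to the short complementary arc, hence has smaller area
than a fixed inscribed triangle. -/
lemma exists_gap_le_sub (hlam : 0 < lam) (hx : IsConvexLoop x lam) (hper : Function.Periodic x lam)
    (hK : LipschitzWith K x) :
    ∃ δ > 0, ∀ n ≥ 3, ∀ s, IsBestInscribed x lam n s → ∀ i, gap s i ≤ lam - δ := by
  set A := hullArea {x 0, x (lam / 3), x (2 * lam / 3)} with hA
  have hApos : 0 < A := by
    rw [hA, hullArea_triple]
    have := hx (u := 0) (v := lam / 3) (w := 2 * lam / 3) (by linarith) (by linarith) (by linarith)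
    positivity
  refine ⟨√A / (2 * K + 1), by positivity, fun n hn s hs i => ?_⟩
  have hgap := gap_le_of_isCyclicPartition hs.toIsCyclicPartition (by lia) i
  have hball : range (x ∘ s) ⊆ Metric.closedBall (x (s i)) (K * (lam - gap s i)) := by
    refine (range_comp_subset_image_Icc hs.toIsCyclicPartition hper (by lia) i).trans ?_
    rintro _ ⟨t, ⟨hit, hti⟩, rfl⟩
    refine (hK.dist_le_mul t (s i)).trans ?_
    rw [Real.dist_eq, abs_of_nonneg (sub_nonneg.mpr hit), gap]
    exact mul_le_mul_of_nonneg_left (by linarith) K.coe_nonneg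
  have hcompl : 0 ≤ lam - gap s i := sub_nonneg.mpr hgap
  have hsqrt : √A ≤ 2 * (K * (lam - gap s i)) := by
    have hradius : 0 ≤ K * (lam - gap s i) := mul_nonneg K.coe_nonneg hcompl
    rw [Real.sqrt_le_left (by positivity)]
    refine (hs.hullArea_le _ ?_ (toFinite _) ?_).trans
      (hullArea_le_of_subset_closedBall hradius hball)
    · rintro _ (rfl | rfl | rfl) <;> exact mem_range_self _
    · exact (ncard_insert_le _ _).trans (by grw [ncard_insert_le, ncard_singleton, hn])
  rw [le_sub_comm, div_le_iff₀' (by positivity)]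
  linarith

lemma exists_pos_le_triangleDet_midpoint (hlam : 0 < lam) (hx : IsConvexLoop x lam)
    (hper : Function.Periodic x lam) (hcont : Continuous x) {δ ε : ℝ} (hδ : 0 < δ) (hε : 0 < ε) :
    ∃ m > 0, ∀ u, ∀ h ∈ Icc δ (lam - ε), m ≤ triangleDet (x u) (x (u + h / 2)) (x (u + h)) := by
  have hK : IsCompact (Icc 0 lam ×ˢ Icc δ (lam - ε)) := isCompact_Icc.prod isCompact_Icc
  obtain ⟨m, hm, hle⟩ := hK.exists_forall_le'
    (f := fun p => triangleDet (x p.1) (x (p.1 + p.2 / 2)) (x (p.1 + p.2))) (a := 0)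
    (by simp only [triangleDet, om]; fun_prop)
    (by rintro ⟨u, h⟩ ⟨-, hδh, hhε⟩; exact hx (by linarith) (by linarith) (by linarith))
  refine ⟨m, hm, fun u h hh => ?_⟩
  have hperiodic : Function.Periodic
      (fun u => triangleDet (x u) (x (u + h / 2)) (x (u + h))) lam := fun u => by
    simp only [add_right_comm u lam, hper _]
  obtain ⟨u', hu', heq⟩ := hperiodic.exists_mem_Ico₀ hlam u
  exact (hle (u', h) ⟨Ico_subset_Icc_self hu', hh⟩).trans_eq heq.symm

lemma triangleDet_le_mul_gap (hK : LipschitzWith K x) (hs : IsCyclicPartition lam n s) (hn : 0 < n)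
    (j : ℤ) :
    triangleDet (x (s (j - 1))) (x (s j)) (x (s (j + 1))) ≤ 2 * K ^ 2 * lam * gap s j := by
  have hchord (i : ℤ) : ‖x (s i) - x (s (i - 1))‖ ≤ K * gap s i := by
    refine (hK.norm_sub_le (s i) (s (i - 1))).trans_eq ?_
    rw [Real.norm_eq_abs, ← gap, abs_of_pos (gap_pos hs.strictMono i)]
  have hnext : ‖x (s (j + 1)) - x (s j)‖ ≤ K * lam := by
    refine (add_sub_cancel_right j 1 ▸ hchord (j + 1)).trans ?_
    grw [gap_le_of_isCyclicPartition hs hn]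
  calc triangleDet (x (s (j - 1))) (x (s j)) (x (s (j + 1)))
      = om (x (s j) - x (s (j - 1))) (x (s (j + 1)) - x (s j)) := by
        simp only [triangleDet, om, Prod.fst_sub, Prod.snd_sub]; ring
    _ ≤ 2 * ‖x (s j) - x (s (j - 1))‖ * ‖x (s (j + 1)) - x (s j)‖ :=
        (le_abs_self _).trans (abs_om_le _ _)
    _ ≤ 2 * (K * gap s j) * (K * lam) := by
        have := gap_pos hs.strictMono j
        gcongr
        exact hchord j
    _ = 2 * K ^ 2 * lam * gap s j := by ring

/-- If an arc is long, optimality forces the triangle at every other vertex to be at least as large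
as the one cut off by this arc; so there can only be few vertices. -/
lemma eventually_gap_lt (hlam : 0 < lam) (hx : IsConvexLoop x lam)
    (hper : Function.Periodic x lam) (hK : LipschitzWith K x) {δ : ℝ} (hδ : 0 < δ) :
    ∀ᶠ n : ℕ in atTop, ∀ s, IsBestInscribed x lam n s → ∀ i, gap s i < δ := by
  obtain ⟨ε, hε, hgap_le⟩ := exists_gap_le_sub hlam hx hper hK
  obtain ⟨m, hm, htri⟩ := exists_pos_le_triangleDet_midpoint hlam hx hper hK.continuous hδ hε
  obtain ⟨N, hN⟩ := exists_nat_gt (2 * K ^ 2 * lam * lam / m)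
  filter_upwards [eventually_ge_atTop (N + 3)] with n hn s hs i
  have hpart := hs.toIsCyclicPartition
  by_contra! hi
  have hear (j : ℕ) (hj : j < N) : m ≤ 2 * K ^ 2 * lam * gap s (i + 1 + j) := by
    have hmid := htri (s (i - 1)) (gap s i) ⟨hi, hgap_le n (by lia) s hs i⟩
    have hpos := gap_pos hpart.strictMono i
    have hsum : s (i - 1) + gap s i = s i := add_sub_cancel _ _
    rw [hsum] at hmid
    refine hmid.trans ((triangleDet_le_triangleDet_of_mem_Ioo hx hper hs (by lia)
      ⟨by linarith, by linarith⟩ (by lia) (by lia)).trans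
      (triangleDet_le_mul_gap hK hpart (by lia) (i + 1 + j)))
  have htotal : ∑ j ∈ Finset.range N, gap s (i + 1 + j) ≤ lam := by
    rw [sum_range_gap]
    exact sub_le_of_isCyclicPartition hpart (by lia)
  have hcount : N * m ≤ 2 * K ^ 2 * lam * lam :=
    calc (N : ℝ) * m = ∑ _j ∈ Finset.range N, m := by simp
      _ ≤ ∑ j ∈ Finset.range N, 2 * K ^ 2 * lam * gap s (i + 1 + j) :=
        Finset.sum_le_sum fun j hj => hear j (Finset.mem_range.mp hj)
      _ ≤ 2 * K ^ 2 * lam * lam := by rw [← Finset.mul_sum]; gcongr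
  rw [div_lt_iff₀ hm] at hN
  linarith

end GapsTendToZero


section Taylor

lemma abs_sub_taylor_le {f : ℝ → ℝ} {n : ℕ} (hf : ContDiff ℝ (n + 1) f) {K : ℝ}
    (hK : ∀ t, |iteratedDeriv (n + 1) f t| ≤ K) (s h : ℝ) :
    |f (s + h) - ∑ j ∈ Finset.range (n + 1), h ^ j / j.factorial * iteratedDeriv j f s| ≤
      K * |h| ^ (n + 1) := by
  rcases eq_or_ne h 0 with rfl | hh
  · rw [Finset.sum_range_succ']
    simp
  have hne : s ≠ s + h := by simpa using hh
  obtain ⟨t, -, ht⟩ := taylor_mean_remainder_lagrange_iteratedDeriv hne (hf.contDiffOn (n := n + 1))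
  have hpoly : taylorWithinEval f n (uIcc s (s + h)) s (s + h) =
      ∑ j ∈ Finset.range (n + 1), h ^ j / j.factorial * iteratedDeriv j f s := by
    rw [taylor_within_apply]
    refine Finset.sum_congr rfl fun j hj => ?_
    have hj' : (j : WithTop ℕ∞) ≤ n + 1 := by
      exact_mod_cast (Finset.mem_range.mp hj).le
    rw [iteratedDerivWithin_eq_iteratedDeriv (uniqueDiffOn_uIcc hne) (hf.of_le hj').contDiffAt
      left_mem_uIcc, add_sub_cancel_left, smul_eq_mul, div_eq_inv_mul]
  rw [← hpoly, ht, add_sub_cancel_left, abs_div, abs_mul, abs_pow, Nat.abs_cast]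
  refine (div_le_self (by positivity) (by exact_mod_cast (n + 1).factorial_pos)).trans ?_
  gcongr
  exact hK t

variable {E : Type*} [NormedAddCommGroup E] [NormedSpace ℝ E] {f : ℝ → E} {m : ℕ}

lemma hasDerivAt_iteratedDeriv (hf : ContDiff ℝ m f) {j : ℕ} (hj : j < m) (t : ℝ) :
    HasDerivAt (iteratedDeriv j f) (iteratedDeriv (j + 1) f t) t := by
  rw [iteratedDeriv_succ]
  exact (hf.differentiable_iteratedDeriv j (by exact_mod_cast hj) t).hasDerivAt

lemma periodic_iteratedDeriv {lam : ℝ} (hf : Function.Periodic f lam) (j : ℕ) :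
    Function.Periodic (iteratedDeriv j f) lam := fun t => by
  rw [← congrFun (iteratedDeriv_comp_add_const j f lam) t, funext hf]

lemma exists_norm_iteratedDeriv_le {lam : ℝ} (hlam : lam ≠ 0) (hf : ContDiff ℝ m f)
    (hper : Function.Periodic f lam) : ∃ K, ∀ t, ‖iteratedDeriv m f t‖ ≤ K := by
  obtain ⟨K, hK⟩ := ((periodic_iteratedDeriv hper m).isBounded_of_continuous hlam
    (hf.continuous_iteratedDeriv m le_rfl)).exists_norm_le
  exact ⟨K, fun t => hK _ (mem_range_self t)⟩

lemma exists_lipschitzWith_of_periodic {lam : ℝ} (hlam : lam ≠ 0) (hf : ContDiff ℝ 1 f)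
    (hper : Function.Periodic f lam) : ∃ K, LipschitzWith K f := by
  obtain ⟨K, hK⟩ := exists_norm_iteratedDeriv_le (m := 1) hlam hf hper
  refine ⟨K.toNNReal, lipschitzWith_of_nnnorm_deriv_le (hf.differentiable one_ne_zero) fun t => ?_⟩
  rw [← iteratedDeriv_one, ← NNReal.coe_le_coe, coe_nnnorm]
  exact (hK t).trans (Real.le_coe_toNNReal K)

end Taylor

/-- The affine curvature `ω(x'', x''')`; the terminology presupposes that `x` is parametrized by
affine arc length. -/
noncomputable def affineCurvature (x : ℝ → ℝ × ℝ) (t : ℝ) : ℝ :=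
  om (iteratedDeriv 2 x t) (iteratedDeriv 3 x t)

/-- The expansion of `ω(x'(s), x(s + h) - x(s))` up to `O(h⁶)` at a parameter `s` where the affine
curvature and its derivative have the values `κ` and `κ'`. -/
noncomputable def chordExpansion (κ κ' h : ℝ) : ℝ := h ^ 2 / 2 - κ * h ^ 4 / 24 - κ' * h ^ 5 / 60

section AffineCurvature

variable {x : ℝ → ℝ × ℝ} {lam : ℝ} {m : ℕ}

lemma periodic_affineCurvature (hper : Function.Periodic x lam) :
    Function.Periodic (affineCurvature x) lam := fun t => by
  rw [affineCurvature, affineCurvature, periodic_iteratedDeriv hper, periodic_iteratedDeriv hper]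

lemma contDiff_affineCurvature (hx : ContDiff ℝ (m + 3) x) :
    ContDiff ℝ m (affineCurvature x) := by
  have hderiv (j : ℕ) (hj : j ≤ 3) : ContDiff ℝ m (iteratedDeriv j x) := by
    rw [iteratedDeriv_eq_iterate]
    exact ContDiff.iterate_deriv' m j (hx.of_le (by exact_mod_cast Nat.add_le_add_left hj m))
  have h₂ := hderiv 2 (by lia)
  have h₃ := hderiv 3 le_rfl
  unfold affineCurvature om
  fun_prop

lemma om_deriv_iteratedDeriv_three (hx : ContDiff ℝ 3 x)
    (haff : ∀ t, om (deriv x t) (iteratedDeriv 2 x t) = 1) (t : ℝ) :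
    om (deriv x t) (iteratedDeriv 3 x t) = 0 := by
  simp only [← iteratedDeriv_one] at haff ⊢
  have h := hasDerivAt_om (hasDerivAt_iteratedDeriv hx (j := 1) (by lia) t)
    (hasDerivAt_iteratedDeriv hx (j := 2) (by lia) t)
  rw [funext haff, om_self, zero_add] at h
  exact h.unique (hasDerivAt_const t 1)

lemma om_deriv_iteratedDeriv_four (hx : ContDiff ℝ 4 x)
    (haff : ∀ t, om (deriv x t) (iteratedDeriv 2 x t) = 1) (t : ℝ) :
    om (deriv x t) (iteratedDeriv 4 x t) = -affineCurvature x t := by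
  have hzero := om_deriv_iteratedDeriv_three (hx.of_le (by norm_num)) haff
  simp only [← iteratedDeriv_one] at hzero ⊢
  have h := hasDerivAt_om (hasDerivAt_iteratedDeriv hx (j := 1) (by lia) t)
    (hasDerivAt_iteratedDeriv hx (j := 3) (by lia) t)
  rw [funext hzero] at h
  exact eq_neg_of_add_eq_zero_right (h.unique (hasDerivAt_const t 0))

lemma hasDerivAt_affineCurvature (hx : ContDiff ℝ 4 x) (t : ℝ) :
    HasDerivAt (affineCurvature x) (om (iteratedDeriv 2 x t) (iteratedDeriv 4 x t)) t := by
  have h := hasDerivAt_om (hasDerivAt_iteratedDeriv hx (j := 2) (by lia) t)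
    (hasDerivAt_iteratedDeriv hx (j := 3) (by lia) t)
  rwa [om_self, zero_add] at h

lemma om_deriv_iteratedDeriv_five (hx : ContDiff ℝ 5 x)
    (haff : ∀ t, om (deriv x t) (iteratedDeriv 2 x t) = 1) (t : ℝ) :
    om (deriv x t) (iteratedDeriv 5 x t) = -2 * deriv (affineCurvature x) t := by
  have hx₄ : ContDiff ℝ 4 x := hx.of_le (by norm_num)
  have hfour := om_deriv_iteratedDeriv_four hx₄ haff
  rw [← iteratedDeriv_one] at hfour ⊢
  have h := hasDerivAt_om (hasDerivAt_iteratedDeriv hx (j := 1) (by lia) t)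
    (hasDerivAt_iteratedDeriv hx (j := 4) (by lia) t)
  rw [funext hfour] at h
  have hk := hasDerivAt_affineCurvature hx₄ t
  have := h.unique hk.neg
  rw [hk.deriv]
  linarith

lemma iteratedDeriv_om_left (hx : ContDiff ℝ m x) (v : ℝ × ℝ) {j : ℕ} (hj : j ≤ m) :
    iteratedDeriv j (fun t => om v (x t)) = fun t => om v (iteratedDeriv j x t) := by
  induction j with
  | zero => simp only [iteratedDeriv_zero]
  | succ j ih =>
    rw [iteratedDeriv_succ, ih (by lia)]
    funext t
    have h := hasDerivAt_om (hasDerivAt_const t v) (hasDerivAt_iteratedDeriv hx (by lia : j < m) t)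
    rw [h.deriv]
    simp only [om, Prod.fst_zero, Prod.snd_zero]
    ring

lemma exists_abs_om_deriv_chord_sub_le (hx : ContDiff ℝ 6 x)
    (haff : ∀ t, om (deriv x t) (iteratedDeriv 2 x t) = 1) (hlam : lam ≠ 0)
    (hper : Function.Periodic x lam) :
    ∃ K, ∀ s h, |om (deriv x s) (x (s + h) - x s) -
      chordExpansion (affineCurvature x s) (deriv (affineCurvature x) s) h| ≤ K * |h| ^ 6 := by
  obtain ⟨K₁, hK₁⟩ := exists_norm_iteratedDeriv_le (m := 1) hlam (hx.of_le (by norm_num)) hper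
  obtain ⟨K₆, hK₆⟩ := exists_norm_iteratedDeriv_le (m := 6) hlam hx hper
  refine ⟨2 * K₁ * K₆, fun s h => ?_⟩
  have hbound (t : ℝ) : |iteratedDeriv 6 (fun t => om (deriv x s) (x t)) t| ≤ 2 * K₁ * K₆ := by
    rw [iteratedDeriv_om_left (m := 6) hx _ le_rfl, ← iteratedDeriv_one]
    refine (abs_om_le _ _).trans ?_
    gcongr
    · linarith [norm_nonneg (iteratedDeriv 1 x s), hK₁ s]
    · exact hK₁ s
    · exact hK₆ t
  have hsmooth : ContDiff ℝ 6 fun t => om (deriv x s) (x t) := by unfold om; fun_prop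
  refine le_of_eq_of_le (congrArg _ ?_) (abs_sub_taylor_le (n := 5) hsmooth hbound s h)
  have hcoeff (j : ℕ) (hj : j ∈ Finset.range 6) :
      h ^ j / j.factorial * iteratedDeriv j (fun t => om (deriv x s) (x t)) s =
        h ^ j / j.factorial * om (deriv x s) (iteratedDeriv j x s) := by
    rw [iteratedDeriv_om_left (m := 6) hx _ (Finset.mem_range.mp hj).le]
  rw [Finset.sum_congr rfl hcoeff]
  simp only [Finset.sum_range_succ, Finset.sum_range_zero, iteratedDeriv_zero, iteratedDeriv_one,
    om_self, haff, om_deriv_iteratedDeriv_three (hx.of_le (by norm_num)) haff,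
    om_deriv_iteratedDeriv_four (hx.of_le (by norm_num)) haff,
    om_deriv_iteratedDeriv_five (hx.of_le (by norm_num)) haff, om_sub_right,
    chordExpansion]
  norm_num [Nat.factorial]
  ring

end AffineCurvature


section AsymptoticAlgebra

variable {α : Type*} {F : Filter α} {a b κ κ' : α → ℝ}

lemma isBigO_of_mul_left {f g h : α → ℝ} (hf : ∀ᶠ z in F, f z ≠ 0)
    (hfg : (fun z => f z * g z) =O[F] fun z => f z * h z) : g =O[F] h := by
  rw [isBigO_mul_iff_isBigO_div hf] at hfg
  exact hfg.congr' .rfl (hf.mono fun z hz => mul_div_cancel_left₀ _ hz)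

lemma isBigO_pow_pow_of_le {H : α → ℝ} (hH : H =O[F] (1 : α → ℝ)) {p q : ℕ} (hpq : p ≤ q) :
    (fun z => H z ^ q) =O[F] fun z => H z ^ p := by
  obtain ⟨r, rfl⟩ := Nat.exists_eq_add_of_le hpq
  exact (((isBigO_refl H F).pow p).mul (hH.pow r)).congr (fun z => (pow_add _ _ _).symm)
    fun z => by simp

lemma isBigO_of_sub_isBigO_pow {H : α → ℝ} (hH : H =O[F] (1 : α → ℝ)) {p : ℕ}
    (hsub : (fun z => a z - H z) =O[F] fun z => H z ^ (p + 1)) : a =O[F] H := by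
  have hpow : (fun z => H z ^ (p + 1)) =O[F] H := by
    simpa only [pow_one] using isBigO_pow_pow_of_le hH (Nat.le_add_left 1 p)
  exact ((hsub.trans hpow).add (isBigO_refl H F)).congr_left fun z => sub_add_cancel _ _

lemma isBigO_pow_sub_pow {H : α → ℝ} {p : ℕ} (haH : a =O[F] H)
    (hsub : (fun z => a z - H z) =O[F] fun z => H z ^ (p + 1)) (m : ℕ) :
    (fun z => a z ^ (m + 1) - H z ^ (m + 1)) =O[F] fun z => H z ^ (m + p + 1) := by
  induction m with
  | zero => simpa using hsub
  | succ m ih =>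
    have hfirst := (haH.mul ih).congr_right fun z =>
      (by ring : H z * H z ^ (m + p + 1) = H z ^ (m + 1 + p + 1))
    have hsecond := (hsub.mul ((isBigO_refl H F).pow (m + 1))).congr_right fun z =>
      (by ring : H z ^ (p + 1) * H z ^ (m + 1) = H z ^ (m + 1 + p + 1))
    exact (hfirst.add hsecond).congr_left fun z => by ring

/-- The fourth order terms only produce a relative error `o(1)` in `(a² - b²) / 2`, and the fifth
order terms are at most `M³ (a + b)²`. -/
lemma isBigO_sub_of_chordExpansion_sub {M : α → ℝ} (ha : ∀ᶠ z in F, 0 < a z)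
    (hb : ∀ᶠ z in F, 0 < b z) (haM : a =O[F] M) (hbM : b =O[F] M) (hM : Tendsto M F (𝓝 0))
    (hκ : κ =O[F] (1 : α → ℝ)) (hκ' : κ' =O[F] (1 : α → ℝ))
    (hbal : (fun z => chordExpansion (κ z) (κ' z) (a z) - chordExpansion (κ z) (κ' z) (-b z)) =O[F]
      fun z => a z ^ 6 + b z ^ 6) :
    (fun z => a z - b z) =O[F] fun z => M z ^ 3 * (a z + b z) := by
  have hM1 : M =O[F] (1 : α → ℝ) := hM.isBigO_one ℝ
  have haσ : a =O[F] fun z => a z + b z := .of_bound' <| by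
    filter_upwards [ha, hb] with z ha hb
    rw [Real.norm_of_nonneg ha.le, Real.norm_of_nonneg (by positivity)]; linarith
  have hbσ : b =O[F] fun z => a z + b z := .of_bound' <| by
    filter_upwards [ha, hb] with z ha hb
    rw [Real.norm_of_nonneg hb.le, Real.norm_of_nonneg (by positivity)]; linarith
  have hpow {c : α → ℝ} (hcM : c =O[F] M) (hcσ : c =O[F] fun z => a z + b z) :
      (fun z => c z ^ 5) =O[F] fun z => (a z + b z) * (M z ^ 3 * (a z + b z)) :=
    ((hcM.pow 3).mul (hcσ.pow 2)).congr (fun z => by ring) fun z => by ring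
  have hpow_succ {c : α → ℝ} (hcM : c =O[F] M) (hcσ : c =O[F] fun z => a z + b z) :
      (fun z => c z ^ 6) =O[F] fun z => (a z + b z) * (M z ^ 3 * (a z + b z)) :=
    ((hcM.trans hM1).mul (hpow hcM hcσ)).congr (fun z => by ring) fun z => by simp
  have hrelative : (fun z => κ z / 12 * (a z ^ 2 + b z ^ 2) * ((a z + b z) * (a z - b z))) =o[F]
      fun z => (a z + b z) * (a z - b z) := by
    have hlim : Tendsto (fun z => M z ^ 2) F (𝓝 0) := by simpa using hM.pow 2
    have hsmall : (fun z => κ z / 12 * (a z ^ 2 + b z ^ 2)) =o[F] (1 : α → ℝ) :=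
      ((hκ.const_mul_left (1 / 12)).mul ((haM.pow 2).add (hbM.pow 2))).trans_isLittleO
        (((isLittleO_one_iff ℝ).mpr hlim).congr_left fun z => (one_mul _).symm)
        |>.congr_left fun z => by ring
    simpa using hsmall.mul_isBigO (isBigO_refl (fun z => (a z + b z) * (a z - b z)) F)
  have hmain : (fun z => (a z + b z) * (a z - b z) -
      κ z / 12 * (a z ^ 2 + b z ^ 2) * ((a z + b z) * (a z - b z))) =O[F]
      fun z => (a z + b z) * (M z ^ 3 * (a z + b z)) := by
    have hfifth := hκ'.mul ((hpow haM haσ).add (hpow hbM hbσ))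
    simp only [Pi.one_apply, one_mul] at hfifth
    refine (((hbal.trans ((hpow_succ haM haσ).add (hpow_succ hbM hbσ))).const_mul_left 2).add
      (hfifth.const_mul_left (1 / 30))).congr_left fun z => ?_
    simp only [chordExpansion]
    ring
  refine isBigO_of_mul_left (f := fun z => a z + b z) ?_ (hrelative.right_isBigO_sub.trans hmain)
  filter_upwards [ha, hb] with z ha hb using by positivity

/-- Compare the terms of order `H⁵` in `chordExpansion κ κ' a - chordExpansion κ κ' (-b)`. -/
lemma isBigO_sub_sub_of_chordExpansion_sub {H : α → ℝ} (hH : ∀ᶠ z in F, H z ≠ 0)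
    (hH1 : H =O[F] (1 : α → ℝ)) (ha : (fun z => a z - H z) =O[F] fun z => H z ^ 3)
    (hb : (fun z => b z - H z) =O[F] fun z => H z ^ 3)
    (hκ : κ =O[F] (1 : α → ℝ)) (hκ' : κ' =O[F] (1 : α → ℝ))
    (hbal : (fun z => chordExpansion (κ z) (κ' z) (a z) - chordExpansion (κ z) (κ' z) (-b z)) =O[F]
      fun z => H z ^ 6) :
    (fun z => a z - b z - κ' z * H z ^ 4 / 30) =O[F] fun z => H z ^ 5 := by
  have haH := isBigO_of_sub_isBigO_pow hH1 ha
  have hbH := isBigO_of_sub_isBigO_pow hH1 hb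
  have hab : (fun z => a z - b z) =O[F] fun z => H z ^ 3 :=
    (ha.sub hb).congr_left fun z => by ring
  have hfourth : (fun z => κ z * (a z ^ 4 - b z ^ 4)) =O[F] fun z => H z ^ 6 :=
    (hκ.mul ((isBigO_pow_sub_pow haH ha 3).sub
      (isBigO_pow_sub_pow hbH hb 3))).congr (fun z => by ring) fun z => by simp
  have hfifth : (fun z => κ' z * (a z ^ 5 - H z ^ 5 + (b z ^ 5 - H z ^ 5))) =O[F]
      fun z => H z ^ 6 :=
    (hκ'.mul (((isBigO_pow_sub_pow haH ha 4).add (isBigO_pow_sub_pow hbH hb 4)).trans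
      (isBigO_pow_pow_of_le hH1 (by lia : 6 ≤ 7)))).congr_right fun z => one_mul _
  have hsquare : (fun z => (a z - b z) * (a z - H z + (b z - H z))) =O[F] fun z => H z ^ 6 :=
    (hab.mul (ha.add hb)).congr_right fun z => by ring
  refine isBigO_of_mul_left hH <| (((hbal.add (hfourth.const_mul_left (1 / 24))).add
    (hfifth.const_mul_left (1 / 60))).sub (hsquare.const_mul_left (1 / 2))).congr
    (fun z => ?_) fun z => by ring
  simp only [chordExpansion]
  ring

end AsymptoticAlgebra


/-- The filter on pairs `(n, i)` that expresses `n → ∞` uniformly in the index `i`. -/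
def atTopUniform : Filter (ℕ × ℤ) := atTop ×ˢ ⊤

/-- The pair `(n, i + 1)` belonging to the cyclic successor of the index `i`. -/
def succIndex (z : ℕ × ℤ) : ℕ × ℤ := (z.1, z.2 + 1)

section UniformAsymptotics

variable {f : ℕ × ℤ → ℝ} {g : ℕ → ℝ}

lemma eventually_atTopUniform {p : ℕ × ℤ → Prop} :
    (∀ᶠ z in atTopUniform, p z) ↔ ∀ᶠ n in atTop, ∀ i, p (n, i) :=
  mem_prod_top

lemma tendsto_fst_atTopUniform : Tendsto Prod.fst atTopUniform atTop := tendsto_fst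

lemma tendsto_succIndex : Tendsto succIndex atTopUniform atTopUniform :=
  fun _ h => eventually_atTopUniform.mpr <|
    (eventually_atTopUniform.mp h).mono fun _ hn i => hn (i + 1)

lemma isBigO_sum_range (hf : f =O[atTopUniform] fun z => g z.1) :
    (fun z => ∑ j ∈ Finset.range z.1, f (z.1, z.2 + 1 + j)) =O[atTopUniform]
      fun z => z.1 * g z.1 := by
  obtain ⟨c, hc⟩ := hf.bound
  refine .of_bound c (eventually_atTopUniform.mpr ?_)
  filter_upwards [eventually_atTopUniform.mp hc] with n hn i
  refine (norm_sum_le_of_le _ (n := fun _ => c * ‖g n‖) fun (j : ℕ) _ =>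
    hn (i + 1 + j)).trans_eq ?_
  rw [Finset.sum_const, Finset.card_range, nsmul_eq_mul, norm_mul, Real.norm_natCast]
  ring

lemma isBigO_sum_range_sub (hf : (fun z => f (succIndex z) - f z) =O[atTopUniform] fun z => g z.1) :
    (fun z => ∑ j ∈ Finset.range z.1, f (z.1, z.2 + 1 + j) - z.1 * f z) =O[atTopUniform]
      fun z => (z.1 : ℝ) ^ 2 * g z.1 := by
  obtain ⟨c, hc⟩ := hf.bound
  refine .of_bound c (eventually_atTopUniform.mpr ?_)
  filter_upwards [eventually_atTopUniform.mp hc] with n hn i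
  have hterm (j : ℕ) (hj : j ∈ Finset.range n) :
      ‖f (n, i + 1 + j) - f (n, i)‖ ≤ n * (c * ‖g n‖) := by
    have htele := Finset.sum_range_sub (fun m : ℕ => f (n, i + m)) (j + 1)
    rw [Nat.cast_zero, add_zero, Nat.cast_succ, add_comm (j : ℤ), ← add_assoc] at htele
    rw [← htele]
    refine (norm_sum_le_of_le _ (n := fun _ => c * ‖g n‖) fun m _ => ?_).trans ?_
    · simpa only [succIndex, Nat.cast_succ, add_assoc] using hn (i + m)
    · rw [Finset.sum_const, Finset.card_range, nsmul_eq_mul]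
      have := (norm_nonneg _).trans (hn i)
      gcongr
      exact Finset.mem_range.mp hj
  calc ‖∑ j ∈ Finset.range n, f (n, i + 1 + j) - n * f (n, i)‖
      = ‖∑ j ∈ Finset.range n, (f (n, i + 1 + j) - f (n, i))‖ := by
        rw [Finset.sum_sub_distrib, Finset.sum_const, Finset.card_range, nsmul_eq_mul]
    _ ≤ ∑ _j ∈ Finset.range n, n * (c * ‖g n‖) := norm_sum_le_of_le _ hterm
    _ = c * ‖(n : ℝ) ^ 2 * g n‖ := by
        rw [Finset.sum_const, Finset.card_range, nsmul_eq_mul, norm_mul, norm_pow,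
          Real.norm_natCast]
        ring

end UniformAsymptotics

section GapDynamics

variable {lam D : ℝ} {n : ℕ} {s : ℤ → ℝ}

lemma abs_gap_add_sub_gap_le (hs : IsCyclicPartition lam n s) (hD : 0 ≤ D)
    (hgap : ∀ i, |gap s (i + 1) - gap s i| ≤ D * (gap s (i + 1) + gap s i)) (i : ℤ) {m : ℕ}
    (hm : m ≤ n) : |gap s (i + m) - gap s i| ≤ 2 * D * lam := by
  have htele := Finset.sum_range_sub (fun j : ℕ => gap s (i + j)) m
  have hfirst := sum_range_gap s i m
  have hsecond := sum_range_gap s (i - 1) m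
  simp only [Nat.cast_zero, add_zero, Nat.cast_succ, sub_add_cancel] at htele hsecond
  rw [← htele]
  calc |∑ j ∈ Finset.range m, (gap s (i + (j + 1)) - gap s (i + j))|
      ≤ ∑ j ∈ Finset.range m, D * (gap s (i + 1 + j) + gap s (i + j)) := by
        refine (Finset.abs_sum_le_sum_abs _ _).trans (Finset.sum_le_sum fun j _ => ?_)
        simpa only [add_assoc, add_comm (1 : ℤ)] using hgap (i + j)
    _ = D * ((s (i + m) - s i) + (s (i - 1 + m) - s (i - 1))) := by
        rw [← Finset.mul_sum, Finset.sum_add_distrib, hfirst, hsecond]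
    _ ≤ D * (lam + lam) := by
        gcongr <;> exact sub_le_of_isCyclicPartition hs (by lia)
    _ = 2 * D * lam := by ring

lemma abs_gap_sub_div_le (hs : IsCyclicPartition lam n s) (hn : 0 < n) (hD : 0 ≤ D)
    (hgap : ∀ i, |gap s (i + 1) - gap s i| ≤ D * (gap s (i + 1) + gap s i)) (i : ℤ) :
    |gap s i - lam / n| ≤ 2 * D * lam := by
  have hn' : (0 : ℝ) < n := by exact_mod_cast hn
  have hsum : ∑ j ∈ Finset.range n, (gap s (i + 1 + j) - gap s i) = -(n * (gap s i - lam / n)) := by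
    rw [Finset.sum_sub_distrib, sum_range_gap, hs.add_period, Finset.sum_const, Finset.card_range,
      nsmul_eq_mul]
    field_simp
    ring
  have hbound : |n * (gap s i - lam / n)| ≤ n * (2 * D * lam) := by
    rw [← abs_neg, ← hsum]
    refine (Finset.abs_sum_le_sum_abs _ _).trans ((Finset.sum_le_card_nsmul _ _ (2 * D * lam)
      fun j hj => ?_).trans_eq (by rw [Finset.card_range, nsmul_eq_mul]))
    have := abs_gap_add_sub_gap_le hs hD hgap i (m := j + 1) (Finset.mem_range.mp hj)
    rwa [Nat.cast_succ, add_comm (j : ℤ), ← add_assoc] at this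
  rw [abs_mul, abs_of_pos hn'] at hbound
  exact le_of_mul_le_mul_left hbound hn'

end GapDynamics


/-- The length of the longest arc of a partition (the supremum of the `gap`s, which is attained for
cyclic partitions). -/
noncomputable def mesh (s : ℤ → ℝ) : ℝ := ⨆ i, gap s i

section Mesh

variable {lam : ℝ} {s : ℕ → ℤ → ℝ}

lemma gap_le_mesh {n : ℕ} {s : ℤ → ℝ} (hs : IsCyclicPartition lam n s) (hn : 0 < n) (i : ℤ) :
    gap s i ≤ mesh s :=
  le_ciSup (f := gap s) ⟨lam, forall_mem_range.mpr (gap_le_of_isCyclicPartition hs hn)⟩ i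

lemma abs_mesh_sub_le {s : ℤ → ℝ} {c B : ℝ} (h : ∀ i, |gap s i - c| ≤ B) : |mesh s - c| ≤ B := by
  have hupper (i : ℤ) : gap s i ≤ c + B := by linarith [(abs_le.mp (h i)).2]
  have hlower : gap s 0 ≤ mesh s := le_ciSup (f := gap s) ⟨c + B, forall_mem_range.mpr hupper⟩ 0
  rw [abs_le]
  exact ⟨by linarith [(abs_le.mp (h 0)).1], sub_le_iff_le_add'.mpr (ciSup_le hupper)⟩

lemma tendsto_mesh (hgap : Tendsto (fun z : ℕ × ℤ => gap (s z.1) z.2) atTopUniform (𝓝 0)) :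
    Tendsto (fun n => mesh (s n)) atTop (𝓝 0) := by
  refine Metric.tendsto_nhds.mpr fun ε hε => ?_
  have hhalf := Metric.tendsto_nhds.mp hgap (ε / 2) (half_pos hε)
  filter_upwards [eventually_atTopUniform.mp hhalf] with n hn
  exact (abs_mesh_sub_le fun i => (hn i).le).trans_lt (half_lt_self hε)

lemma isBigO_gap_sub_div_mesh (hs : ∀ᶠ n in atTop, IsCyclicPartition lam n (s n))
    (hdiff : (fun z : ℕ × ℤ => gap (s z.1) (z.2 + 1) - gap (s z.1) z.2) =O[atTopUniform]
      fun z => mesh (s z.1) ^ 3 * (gap (s z.1) (z.2 + 1) + gap (s z.1) z.2)) :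
    (fun z : ℕ × ℤ => gap (s z.1) z.2 - lam / z.1) =O[atTopUniform]
      fun z => mesh (s z.1) ^ 3 := by
  obtain ⟨c, hc, hbound⟩ := hdiff.exists_nonneg
  refine .of_bound (2 * c * lam) (eventually_atTopUniform.mpr ?_)
  filter_upwards [hs, eventually_gt_atTop 0, eventually_atTopUniform.mp hbound.bound]
    with n hs hn hbound i
  have hmesh : 0 ≤ mesh (s n) := (gap_pos hs.strictMono 0).le.trans (gap_le_mesh hs hn 0)
  have hgap (i : ℤ) : |gap (s n) (i + 1) - gap (s n) i| ≤
      c * mesh (s n) ^ 3 * (gap (s n) (i + 1) + gap (s n) i) := by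
    have hpos (i : ℤ) := (gap_pos hs.strictMono i).le
    have h := hbound i
    rwa [Real.norm_of_nonneg (mul_nonneg (by positivity) (add_nonneg (hpos _) (hpos _))),
      ← mul_assoc] at h
  rw [Real.norm_of_nonneg (pow_nonneg hmesh 3)]
  exact (abs_gap_sub_div_le hs hn (by positivity) hgap i).trans_eq (by ring)

lemma isBigO_mesh (hgap : Tendsto (fun z : ℕ × ℤ => gap (s z.1) z.2) atTopUniform (𝓝 0))
    (hsub : (fun z : ℕ × ℤ => gap (s z.1) z.2 - lam / z.1) =O[atTopUniform]
      fun z => mesh (s z.1) ^ 3) :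
    (fun n => mesh (s n)) =O[atTop] fun n : ℕ => lam / n := by
  have hmesh := tendsto_mesh hgap
  have hcube : (fun n => mesh (s n) ^ 3) =o[atTop] fun n => mesh (s n) := by
    have hsq : Tendsto (fun n => mesh (s n) ^ 2) atTop (𝓝 0) := by simpa using hmesh.pow 2
    exact (((isLittleO_one_iff ℝ).mpr hsq).mul_isBigO
      (isBigO_refl (fun n => mesh (s n)) atTop)).congr (fun n => by ring) fun n => one_mul _
  have hmesh_sub : (fun n : ℕ => mesh (s n) - lam / n) =O[atTop] fun n => mesh (s n) ^ 3 := by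
    obtain ⟨c, hc⟩ := hsub.bound
    exact .of_bound c ((eventually_atTopUniform.mp hc).mono fun n hn => abs_mesh_sub_le hn)
  exact (hmesh_sub.trans_isLittleO hcube).right_isBigO_sub.congr_right fun n => sub_sub_cancel _ _

lemma isBigO_gap_sub_div (hs : ∀ᶠ n in atTop, IsCyclicPartition lam n (s n))
    (hgap : Tendsto (fun z : ℕ × ℤ => gap (s z.1) z.2) atTopUniform (𝓝 0))
    (hdiff : (fun z : ℕ × ℤ => gap (s z.1) (z.2 + 1) - gap (s z.1) z.2) =O[atTopUniform]
      fun z => mesh (s z.1) ^ 3 * (gap (s z.1) (z.2 + 1) + gap (s z.1) z.2)) :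
    (fun z : ℕ × ℤ => gap (s z.1) z.2 - lam / z.1) =O[atTopUniform]
      fun z => (lam / z.1 : ℝ) ^ 3 := by
  have hsub := isBigO_gap_sub_div_mesh hs hdiff
  exact hsub.trans (((isBigO_mesh hgap hsub).comp_tendsto tendsto_fst_atTopUniform).pow 3)

end Mesh


section UniformEstimates

variable {lam : ℝ} {s : ℕ → ℤ → ℝ} {κ κ' : ℕ × ℤ → ℝ} {k : ℝ → ℝ}

lemma isBigO_div_fst_one (lam : ℝ) :
    (fun z : ℕ × ℤ => lam / z.1) =O[atTopUniform] (1 : ℕ × ℤ → ℝ) :=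
  ((tendsto_const_div_atTop_nhds_zero_nat lam).comp tendsto_fst_atTopUniform).isBigO_one ℝ

lemma isBigO_gap_div (hsub : (fun z : ℕ × ℤ => gap (s z.1) z.2 - lam / z.1) =O[atTopUniform]
      fun z => (lam / z.1 : ℝ) ^ 3) :
    (fun z : ℕ × ℤ => gap (s z.1) z.2) =O[atTopUniform] fun z => lam / z.1 :=
  isBigO_of_sub_isBigO_pow (isBigO_div_fst_one lam) hsub

lemma isBigO_gap_sub_of_chordExpansion_sub (hs : ∀ᶠ n in atTop, IsCyclicPartition lam n (s n))
    (hgap : Tendsto (fun z : ℕ × ℤ => gap (s z.1) z.2) atTopUniform (𝓝 0))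
    (hκ : κ =O[atTopUniform] (1 : ℕ × ℤ → ℝ)) (hκ' : κ' =O[atTopUniform] (1 : ℕ × ℤ → ℝ))
    (hbal : (fun z => chordExpansion (κ z) (κ' z) (gap (s z.1) (z.2 + 1)) -
      chordExpansion (κ z) (κ' z) (-gap (s z.1) z.2)) =O[atTopUniform]
      fun z => gap (s z.1) (z.2 + 1) ^ 6 + gap (s z.1) z.2 ^ 6) :
    (fun z : ℕ × ℤ => gap (s z.1) z.2 - lam / z.1) =O[atTopUniform]
      fun z => (lam / z.1 : ℝ) ^ 3 := by
  have hpos : ∀ᶠ z in atTopUniform, 0 < gap (s z.1) z.2 :=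
    eventually_atTopUniform.mpr (hs.mono fun n hn i => gap_pos hn.strictMono i)
  have hmesh : (fun z : ℕ × ℤ => gap (s z.1) z.2) =O[atTopUniform] fun z => mesh (s z.1) := by
    refine .of_bound' (eventually_atTopUniform.mpr ?_)
    filter_upwards [hs, eventually_gt_atTop 0] with n hs hn i
    rw [Real.norm_of_nonneg (gap_pos hs.strictMono i).le]
    exact (gap_le_mesh hs hn i).trans (le_abs_self _)
  exact isBigO_gap_sub_div hs hgap <|
    isBigO_sub_of_chordExpansion_sub (tendsto_succIndex.eventually hpos) hpos
      (hmesh.comp_tendsto tendsto_succIndex) hmesh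
      ((tendsto_mesh hgap).comp tendsto_fst_atTopUniform) hκ hκ' hbal

lemma isBigO_gap_succ_sub_gap (hlam : 0 < lam)
    (hsub : (fun z : ℕ × ℤ => gap (s z.1) z.2 - lam / z.1) =O[atTopUniform]
      fun z => (lam / z.1 : ℝ) ^ 3)
    (hκ : κ =O[atTopUniform] (1 : ℕ × ℤ → ℝ)) (hκ' : κ' =O[atTopUniform] (1 : ℕ × ℤ → ℝ))
    (hbal : (fun z => chordExpansion (κ z) (κ' z) (gap (s z.1) (z.2 + 1)) -
      chordExpansion (κ z) (κ' z) (-gap (s z.1) z.2)) =O[atTopUniform]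
      fun z => gap (s z.1) (z.2 + 1) ^ 6 + gap (s z.1) z.2 ^ 6) :
    (fun z : ℕ × ℤ => gap (s z.1) (z.2 + 1) - gap (s z.1) z.2 - κ' z * (lam / z.1) ^ 4 / 30)
      =O[atTopUniform] fun z => (lam / z.1 : ℝ) ^ 5 := by
  have hne : ∀ᶠ z : ℕ × ℤ in atTopUniform, (lam / z.1 : ℝ) ≠ 0 :=
    eventually_atTopUniform.mpr <| (eventually_gt_atTop 0).mono fun n hn _ =>
      (div_pos hlam (Nat.cast_pos.mpr hn)).ne'
  have hself := isBigO_gap_div hsub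
  exact isBigO_sub_sub_of_chordExpansion_sub hne (isBigO_div_fst_one lam)
    (hsub.comp_tendsto tendsto_succIndex) hsub hκ hκ'
    (hbal.trans (((hself.comp_tendsto tendsto_succIndex).pow 6).add (hself.pow 6)))

lemma isBigO_one_of_periodic {α : Type*} {F : Filter α} {f : ℝ → ℝ} (hlam : lam ≠ 0)
    (hf : Continuous f) (hper : Function.Periodic f lam) (u : α → ℝ) :
    (fun z => f (u z)) =O[F] (1 : α → ℝ) := by
  obtain ⟨K, hK⟩ := (hper.isBounded_of_continuous hlam hf).exists_norm_le
  exact .of_bound K (.of_forall fun z => by simpa using hK _ (mem_range_self (u z)))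

lemma isBigO_comp_succ_sub (hlam : lam ≠ 0) (hk : ContDiff ℝ 2 k) (hper : Function.Periodic k lam)
    (hsub : (fun z : ℕ × ℤ => gap (s z.1) z.2 - lam / z.1) =O[atTopUniform]
      fun z => (lam / z.1 : ℝ) ^ 3) :
    (fun z : ℕ × ℤ => k (s z.1 (z.2 + 1)) - k (s z.1 z.2) - deriv k (s z.1 z.2) * (lam / z.1))
      =O[atTopUniform] fun z => (lam / z.1 : ℝ) ^ 2 := by
  obtain ⟨K, hK⟩ := exists_norm_iteratedDeriv_le (m := 2) hlam hk hper
  have htaylor : (fun z : ℕ × ℤ => k (s z.1 (z.2 + 1)) - k (s z.1 z.2) -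
      gap (s z.1) (z.2 + 1) * deriv k (s z.1 z.2)) =O[atTopUniform]
      fun z => gap (s z.1) (z.2 + 1) ^ 2 := by
    refine .of_bound K (.of_forall fun z => ?_)
    have h := abs_sub_taylor_le (n := 1) hk hK (s z.1 z.2) (gap (s z.1) (z.2 + 1))
    have hnext : s z.1 z.2 + gap (s z.1) (z.2 + 1) = s z.1 (z.2 + 1) := by simp [gap]
    simpa [Finset.sum_range_succ, hnext, sub_sub] using h
  have hgap := (isBigO_gap_div hsub).comp_tendsto tendsto_succIndex
  have hderiv : (fun z : ℕ × ℤ => deriv k (s z.1 z.2) * (gap (s z.1) (z.2 + 1) - lam / z.1))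
      =O[atTopUniform] fun z => (lam / z.1 : ℝ) ^ 2 := by
    have hbounded := isBigO_one_of_periodic (F := atTopUniform) hlam
      (hk.continuous_deriv (by norm_num))
      (iteratedDeriv_one (f := k) ▸ periodic_iteratedDeriv hper 1) fun z : ℕ × ℤ => s z.1 z.2
    exact ((hbounded.mul (hsub.comp_tendsto tendsto_succIndex)).congr_right
      fun z => one_mul _).trans (isBigO_pow_pow_of_le (isBigO_div_fst_one lam) (by lia : 2 ≤ 3))
  exact ((htaylor.trans (hgap.pow 2)).add hderiv).congr_left fun z => by ring

lemma abs_integral_sub_le {K : NNReal} (hk : LipschitzWith K k) {u v : ℝ} (huv : u ≤ v) :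
    |(v - u) * k v - ∫ t in u..v, k t| ≤ K * (v - u) ^ 2 := by
  have hconst : (v - u) * k v - ∫ t in u..v, k t = ∫ t in u..v, (k v - k t) := by
    rw [intervalIntegral.integral_sub intervalIntegrable_const
      (hk.continuous.intervalIntegrable u v), intervalIntegral.integral_const, smul_eq_mul]
  rw [hconst]
  refine (intervalIntegral.norm_integral_le_of_norm_le_const (E := ℝ)
    (C := K * (v - u)) fun t ht => ?_).trans_eq ?_
  · rw [uIoc_of_le huv] at ht
    refine (hk.norm_sub_le v t).trans ?_
    rw [Real.norm_of_nonneg (sub_nonneg.mpr ht.2)]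
    gcongr
    exact ht.1.le
  · rw [abs_of_nonneg (sub_nonneg.mpr huv)]
    ring

lemma sum_integral_of_isCyclicPartition {n : ℕ} {s : ℤ → ℝ} (hs : IsCyclicPartition lam n s)
    (hk : Continuous k) (hper : Function.Periodic k lam) (i : ℤ) :
    ∑ j ∈ Finset.range n, ∫ t in s (i + 1 + j - 1)..s (i + 1 + j), k t = ∫ t in 0..lam, k t := by
  have h := intervalIntegral.sum_integral_adjacent_intervals (f := k) (μ := volume) (n := n)
    (a := fun j : ℕ => s (i + j)) fun j _ => hk.intervalIntegrable _ _
  rw [Nat.cast_zero, add_zero, hs.add_period, hper.intervalIntegral_add_eq (s i) 0, zero_add] at h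
  rw [← h]
  refine Finset.sum_congr rfl fun j _ => ?_
  congr 2 <;> push_cast <;> ring

lemma isBigO_mul_sum_sub_integral (hlam : lam ≠ 0)
    (hs : ∀ᶠ n in atTop, IsCyclicPartition lam n (s n)) (hk : ContDiff ℝ 1 k)
    (hper : Function.Periodic k lam)
    (hsub : (fun z : ℕ × ℤ => gap (s z.1) z.2 - lam / z.1) =O[atTopUniform]
      fun z => (lam / z.1 : ℝ) ^ 3) :
    (fun z : ℕ × ℤ => lam / z.1 * ∑ j ∈ Finset.range z.1, k (s z.1 (z.2 + 1 + j)) -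
      ∫ t in 0..lam, k t) =O[atTopUniform] fun z => (z.1 : ℝ) * (lam / z.1) ^ 2 := by
  obtain ⟨K, hK⟩ := exists_lipschitzWith_of_periodic hlam hk hper
  have harc : (fun z : ℕ × ℤ => gap (s z.1) z.2 * k (s z.1 z.2) -
      ∫ t in s z.1 (z.2 - 1)..s z.1 z.2, k t) =O[atTopUniform] fun z => (lam / z.1 : ℝ) ^ 2 := by
    refine .trans (.of_bound K (eventually_atTopUniform.mpr (hs.mono fun n hs i => ?_)))
      ((isBigO_gap_div hsub).pow 2)
    rw [Real.norm_of_nonneg (sq_nonneg _)]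
    exact abs_integral_sub_le hK (hs.strictMono.monotone (sub_one_lt i).le)
  have hdiff : (fun z : ℕ × ℤ => (gap (s z.1) z.2 - lam / z.1) * k (s z.1 z.2)) =O[atTopUniform]
      fun z => (lam / z.1 : ℝ) ^ 2 :=
    (((hsub.trans (isBigO_pow_pow_of_le (isBigO_div_fst_one lam) (by lia : 2 ≤ 3))).mul
      (isBigO_one_of_periodic hlam hk.continuous hper fun z : ℕ × ℤ => s z.1 z.2))).congr_right
      fun z => mul_one _
  have hterm : (fun z : ℕ × ℤ => lam / z.1 * k (s z.1 z.2) -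
      ∫ t in s z.1 (z.2 - 1)..s z.1 z.2, k t) =O[atTopUniform] fun z => (lam / z.1 : ℝ) ^ 2 :=
    (harc.sub hdiff).congr_left fun z => by ring
  refine (isBigO_sum_range (g := fun n => (lam / n) ^ 2) hterm).congr'
    (eventually_atTopUniform.mpr (hs.mono fun n hs i => ?_)) .rfl
  simp only [Finset.sum_sub_distrib, ← Finset.mul_sum]
  rw [sum_integral_of_isCyclicPartition hs hk.continuous hper]

end UniformEstimates


section GapExpansion

variable {lam : ℝ} {s : ℕ → ℤ → ℝ} {k : ℝ → ℝ}

/-- The corrected gap `gap - H³ k / 30`, with `H = λ / n`, has increments of order `H⁵` only. -/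
lemma isBigO_corrected_gap_succ_sub (hlam : lam ≠ 0) (hk : ContDiff ℝ 2 k)
    (hper : Function.Periodic k lam)
    (hsub : (fun z : ℕ × ℤ => gap (s z.1) z.2 - lam / z.1) =O[atTopUniform]
      fun z => (lam / z.1 : ℝ) ^ 3)
    (hsucc : (fun z : ℕ × ℤ => gap (s z.1) (z.2 + 1) - gap (s z.1) z.2 -
      deriv k (s z.1 z.2) * (lam / z.1) ^ 4 / 30) =O[atTopUniform] fun z => (lam / z.1 : ℝ) ^ 5) :
    (fun z : ℕ × ℤ => (gap (s z.1) (z.2 + 1) - (lam / z.1) ^ 3 / 30 * k (s z.1 (z.2 + 1))) -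
      (gap (s z.1) z.2 - (lam / z.1) ^ 3 / 30 * k (s z.1 z.2))) =O[atTopUniform]
      fun z => (lam / z.1 : ℝ) ^ 5 := by
  have hcurv : (fun z : ℕ × ℤ => (lam / z.1) ^ 3 * (k (s z.1 (z.2 + 1)) - k (s z.1 z.2) -
      deriv k (s z.1 z.2) * (lam / z.1))) =O[atTopUniform] fun z => (lam / z.1 : ℝ) ^ 5 :=
    ((isBigO_refl _ _).mul (isBigO_comp_succ_sub hlam hk hper hsub)).congr_right fun z => by ring
  exact (hsucc.sub (hcurv.const_mul_left (1 / 30))).congr_left fun z => by ring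

/-- Summing the corrected gaps over one period determines their common value, because the gaps
themselves sum to `λ` and the curvature terms form a Riemann sum. -/
lemma isBigO_gap_expansion_of_succ (hlam : 0 < lam)
    (hs : ∀ᶠ n in atTop, IsCyclicPartition lam n (s n)) (hk : ContDiff ℝ 2 k)
    (hper : Function.Periodic k lam)
    (hsub : (fun z : ℕ × ℤ => gap (s z.1) z.2 - lam / z.1) =O[atTopUniform]
      fun z => (lam / z.1 : ℝ) ^ 3)
    (hsucc : (fun z : ℕ × ℤ => gap (s z.1) (z.2 + 1) - gap (s z.1) z.2 -
      deriv k (s z.1 z.2) * (lam / z.1) ^ 4 / 30) =O[atTopUniform] fun z => (lam / z.1 : ℝ) ^ 5) :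
    (fun z : ℕ × ℤ => gap (s z.1) z.2 - lam / z.1 +
      lam ^ 2 / (30 * (z.1 : ℝ) ^ 3) * (∫ t in 0..lam, k t) -
      lam ^ 3 / (30 * (z.1 : ℝ) ^ 3) * k (s z.1 z.2)) =O[atTopUniform]
      fun z => (lam / z.1 : ℝ) ^ 4 := by
  have hn : ∀ᶠ z : ℕ × ℤ in atTopUniform, (z.1 : ℝ) ≠ 0 := eventually_atTopUniform.mpr <|
    (eventually_ne_atTop 0).mono fun n hn _ => Nat.cast_ne_zero.mpr hn
  have hscale : (fun z : ℕ × ℤ => (z.1 : ℝ) ^ 2 * (lam / z.1) ^ 5) =O[atTopUniform]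
      fun z => (z.1 : ℝ) * (lam / z.1) ^ 4 :=
    (isBigO_const_mul_self lam _ _).congr' (hn.mono fun z hn => by field_simp) .rfl
  have hmean := (isBigO_sum_range_sub (g := fun n => (lam / n) ^ 5)
    (f := fun z => gap (s z.1) z.2 - (lam / z.1) ^ 3 / 30 * k (s z.1 z.2))
    (isBigO_corrected_gap_succ_sub hlam.ne' hk hper hsub hsucc)).trans hscale
  have hriemann := ((isBigO_refl (fun z : ℕ × ℤ => (lam / z.1 : ℝ) ^ 2) _).mul
    (isBigO_mul_sum_sub_integral hlam.ne' hs (hk.of_le (by norm_num)) hper hsub)).congr_right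
      (g₂ := fun z => (z.1 : ℝ) * (lam / z.1 : ℝ) ^ 4) fun z => by ring
  refine isBigO_of_mul_left hn ((hmean.neg_left.sub (hriemann.const_mul_left (1 / 30))).congr'
    (eventually_atTopUniform.mpr ?_) .rfl)
  filter_upwards [hs, eventually_gt_atTop 0] with n hs hn i
  rw [Finset.sum_sub_distrib, ← Finset.mul_sum, sum_range_gap, hs.add_period]
  field_simp
  ring

/-- `hbal` expresses, up to sixth order terms, that the tangent of the curve at `s n i` is parallel
to the chord joining the neighbouring vertices. -/
theorem isBigO_gap_expansion (hlam : 0 < lam) (hs : ∀ᶠ n in atTop, IsCyclicPartition lam n (s n))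
    (hgap : Tendsto (fun z : ℕ × ℤ => gap (s z.1) z.2) atTopUniform (𝓝 0)) (hk : ContDiff ℝ 2 k)
    (hper : Function.Periodic k lam)
    (hbal : (fun z => chordExpansion (k (s z.1 z.2)) (deriv k (s z.1 z.2)) (gap (s z.1) (z.2 + 1)) -
      chordExpansion (k (s z.1 z.2)) (deriv k (s z.1 z.2)) (-gap (s z.1) z.2)) =O[atTopUniform]
      fun z => gap (s z.1) (z.2 + 1) ^ 6 + gap (s z.1) z.2 ^ 6) :
    (fun z : ℕ × ℤ => gap (s z.1) z.2 - lam / z.1 +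
      lam ^ 2 / (30 * (z.1 : ℝ) ^ 3) * (∫ t in 0..lam, k t) -
      lam ^ 3 / (30 * (z.1 : ℝ) ^ 3) * k (s z.1 z.2)) =O[atTopUniform]
      fun z => (lam / z.1 : ℝ) ^ 4 := by
  have hκ := isBigO_one_of_periodic (F := atTopUniform) hlam.ne' hk.continuous hper
    fun z => s z.1 z.2
  have hκ' := isBigO_one_of_periodic (F := atTopUniform) hlam.ne'
    (hk.continuous_deriv (by norm_num)) (iteratedDeriv_one (f := k) ▸ periodic_iteratedDeriv hper 1)
    fun z => s z.1 z.2
  have hsub := isBigO_gap_sub_of_chordExpansion_sub hs hgap hκ hκ' hbal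
  exact isBigO_gap_expansion_of_succ hlam hs hk hper hsub
    (isBigO_gap_succ_sub_gap hlam hsub hκ hκ' hbal)

end GapExpansion


section BestInscribed

variable {x : ℝ → ℝ × ℝ} {lam : ℝ} {n : ℕ} {s : ℤ → ℝ} {C : Set (ℝ × ℝ)}

lemma isCyclicPartition_of_forall_lt (hn : 0 < n) (hs0 : 0 ≤ s 1)
    (hmono : ∀ i : ℤ, 1 ≤ i → i < n → s i < s (i + 1)) (hlast : s n < lam)
    (hcyc : ∀ i : ℤ, s (i + n) = s i + lam) : IsCyclicPartition lam n s := by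
  refine ⟨strictMono_int_of_lt_succ fun i => ?_, hcyc⟩
  have hperiodic : Function.Periodic (fun i => s (i + 1) - s i) (n : ℤ) := fun i => by
    simp only [add_right_comm i (n : ℤ), hcyc, add_sub_add_right_eq_sub]
  obtain ⟨m, ⟨hm₀, hmn⟩, heq⟩ := hperiodic.exists_mem_Ioc (by exact_mod_cast hn) i 0
  rw [← sub_pos, heq, sub_pos]
  rw [zero_add] at hmn
  rcases hmn.lt_or_eq with hlt | rfl
  · exact hmono m hm₀ hlt
  · rw [add_comm, hcyc]
    linarith

lemma hullArea_le_sSup (hcomp : IsCompact C) (hconv : Convex ℝ C) {V : Set (ℝ × ℝ)}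
    (hV : V.Finite) (hVC : V ⊆ frontier C) (hcard : V.ncard ≤ n) :
    hullArea V ≤ sSup {A : ℝ | ∃ S : Finset (ℝ × ℝ), ↑S ⊆ frontier C ∧ S.card ≤ n ∧
      A = (volume (convexHull ℝ (S : Set (ℝ × ℝ)))).toReal} := by
  refine le_csSup ⟨(volume C).toReal, ?_⟩
    ⟨hV.toFinset, by simpa using hVC, by rwa [← ncard_eq_toFinset_card V hV], by simp [hullArea]⟩
  rintro _ ⟨S, hS, -, rfl⟩
  exact ENNReal.toReal_mono hcomp.measure_lt_top.ne
    (measure_mono (convexHull_min (hS.trans hcomp.isClosed.frontier_subset) hconv))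

lemma range_eq_image_Icc {α : Type*} {f : ℝ → α} (hlam : 0 < lam) (hper : Function.Periodic f lam) :
    range f = f '' Icc 0 lam := by
  simpa using (hper.image_Icc hlam 0).symm

lemma isBestInscribed_of_hullArea_eq_sSup (hcomp : IsCompact C) (hconv : Convex ℝ C)
    (hper : Function.Periodic x lam) (hfr : range x ⊆ frontier C)
    (hs : IsCyclicPartition lam n s) (hn : 0 < n)
    (hbest : hullArea ((Finset.Icc (1 : ℤ) n).image fun i => x (s i) : Finset (ℝ × ℝ)) =
      sSup {A : ℝ | ∃ S : Finset (ℝ × ℝ), ↑S ⊆ frontier C ∧ S.card ≤ n ∧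
        A = (volume (convexHull ℝ (S : Set (ℝ × ℝ)))).toReal}) :
    IsBestInscribed x lam n s := by
  have hvertices : range (x ∘ s) =
      ((Finset.Icc (1 : ℤ) n).image fun i => x (s i) : Finset (ℝ × ℝ)) := by
    rw [← (periodic_comp_of_isCyclicPartition hs hper).image_Ioc (by exact_mod_cast hn) 0,
      Finset.coe_image, Finset.coe_Icc, zero_add]
    rfl
  refine ⟨hs, fun V hV hfin hcard => ?_⟩
  rw [hvertices, hbest]
  exact hullArea_le_sSup hcomp hconv hfin (hV.trans hfr) hcard

lemma isConvexLoop_of_affineParametrization (hlam : 0 < lam) (hx : ContDiff ℝ 2 x)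
    (haff : ∀ t, om (deriv x t) (iteratedDeriv 2 x t) = 1) (hper : Function.Periodic x lam)
    (hinj : InjOn x (Ico 0 lam)) (hC : StrictConvex ℝ C) (hclosed : IsClosed C)
    (hfr : range x ⊆ frontier C) : IsConvexLoop x lam := by
  refine isConvexLoop_of_strictConvex hC hclosed (x' := iteratedDeriv 1 x)
    (x'' := iteratedDeriv 2 x) (fun t => ?_) (hasDerivAt_iteratedDeriv hx (by norm_num))
    (fun t => ?_) (fun t => hfr (mem_range_self t)) fun u v => ne_of_injOn_Ico hlam hper hinj
  · simpa using hasDerivAt_iteratedDeriv hx (j := 0) (by norm_num) t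
  · simp [iteratedDeriv_one, haff]

end BestInscribed

section BestInscribedExpansion

variable {x : ℝ → ℝ × ℝ} {lam : ℝ} {s : ℕ → ℤ → ℝ}

lemma tendsto_gap_of_isBestInscribed (hlam : 0 < lam) (hx : ContDiff ℝ 1 x)
    (hloop : IsConvexLoop x lam) (hper : Function.Periodic x lam)
    (hs : ∀ᶠ n in atTop, IsBestInscribed x lam n (s n)) :
    Tendsto (fun z : ℕ × ℤ => gap (s z.1) z.2) atTopUniform (𝓝 0) := by
  obtain ⟨K, hK⟩ := exists_lipschitzWith_of_periodic hlam.ne' hx hper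
  refine Metric.tendsto_nhds.mpr fun δ hδ => eventually_atTopUniform.mpr ?_
  filter_upwards [hs, eventually_gap_lt hlam hloop hper hK hδ] with n hn hlt i
  rw [Real.dist_0_eq_abs, abs_of_pos (gap_pos hn.strictMono i)]
  exact hlt _ hn i

lemma isBigO_chordExpansion_sub (hlam : 0 < lam) (hx : ContDiff ℝ 6 x)
    (haff : ∀ t, om (deriv x t) (iteratedDeriv 2 x t) = 1) (hloop : IsConvexLoop x lam)
    (hper : Function.Periodic x lam) (hs : ∀ᶠ n in atTop, IsBestInscribed x lam n (s n)) :
    (fun z : ℕ × ℤ =>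
      chordExpansion (affineCurvature x (s z.1 z.2)) (deriv (affineCurvature x) (s z.1 z.2))
        (gap (s z.1) (z.2 + 1)) -
      chordExpansion (affineCurvature x (s z.1 z.2)) (deriv (affineCurvature x) (s z.1 z.2))
        (-gap (s z.1) z.2)) =O[atTopUniform]
      fun z => gap (s z.1) (z.2 + 1) ^ 6 + gap (s z.1) z.2 ^ 6 := by
  obtain ⟨K, hK⟩ := exists_abs_om_deriv_chord_sub_le hx haff hlam.ne' hper
  refine .of_bound K (eventually_atTopUniform.mpr ?_)
  filter_upwards [hs, eventually_ge_atTop 3] with n hbest hn i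
  have hparallel := om_deriv_chord_eq_zero hloop hper hbest hn
    (hx.differentiable (by norm_num) (s n i)).hasDerivAt
  have hnext := hK (s n i) (gap (s n) (i + 1))
  have hprev := hK (s n i) (-gap (s n) i)
  have hnext_eq : s n i + gap (s n) (i + 1) = s n (i + 1) := by simp [gap]
  have hprev_eq : s n i + -gap (s n) i = s n (i - 1) := by simp [gap]
  rw [hnext_eq, om_sub_right] at hnext
  rw [hprev_eq, om_sub_right, abs_neg] at hprev
  rw [om_sub_right] at hparallel
  have hnonneg : 0 ≤ gap (s n) (i + 1) ^ 6 + gap (s n) i ^ 6 := by positivity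
  rw [Even.pow_abs (by decide), abs_le] at hnext hprev
  rw [Real.norm_of_nonneg hnonneg, Real.norm_eq_abs, mul_add, abs_le]
  constructor <;> linarith

theorem isBigO_gap_expansion_of_isBestInscribed (hlam : 0 < lam) (hx : ContDiff ℝ 6 x)
    (haff : ∀ t, om (deriv x t) (iteratedDeriv 2 x t) = 1) (hloop : IsConvexLoop x lam)
    (hper : Function.Periodic x lam) (hs : ∀ᶠ n in atTop, IsBestInscribed x lam n (s n)) :
    (fun z : ℕ × ℤ => gap (s z.1) z.2 - lam / z.1 +
      lam ^ 2 / (30 * (z.1 : ℝ) ^ 3) * (∫ t in 0..lam, affineCurvature x t) -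
      lam ^ 3 / (30 * (z.1 : ℝ) ^ 3) * affineCurvature x (s z.1 z.2)) =O[atTopUniform]
      fun z => (lam / z.1 : ℝ) ^ 4 :=
  isBigO_gap_expansion hlam (hs.mono fun _ h => h.toIsCyclicPartition)
    (tendsto_gap_of_isBestInscribed hlam (hx.of_le (by norm_num)) hloop hper hs)
    (contDiff_affineCurvature (hx.of_le (by norm_num))) (periodic_affineCurvature hper)
    (isBigO_chordExpansion_sub hlam hx haff hloop hper hs)

end BestInscribedExpansion

theorem stmt_7_general (x : ℝ → ℝ × ℝ) (lam : ℝ) (hlam : 0 < lam) (hx : ContDiff ℝ 6 x)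
    (haff : ∀ t : ℝ, om (deriv x t) (iteratedDeriv 2 x t) = 1)
    (hper : ∀ t : ℝ, x (t + lam) = x t)
    (hinj : Set.InjOn x (Set.Ico 0 lam))
    (C : Set (ℝ × ℝ)) (hcomp : IsCompact C) (hconv : StrictConvex ℝ C)
    (hbd : x '' Set.Icc 0 lam = frontier C)
    (k : ℝ → ℝ) (hk : ∀ t : ℝ, k t = om (iteratedDeriv 2 x t) (iteratedDeriv 3 x t))
    (s : ℕ → ℤ → ℝ)
    (hs0 : ∀ n : ℕ, 3 ≤ n → 0 ≤ s n 1)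
    (hmono : ∀ n : ℕ, 3 ≤ n → ∀ i : ℤ, 1 ≤ i → i < (n : ℤ) → s n i < s n (i + 1))
    (hlast : ∀ n : ℕ, 3 ≤ n → s n (n : ℤ) < lam)
    (hcyc : ∀ n : ℕ, 3 ≤ n → ∀ i : ℤ, s n (i + (n : ℤ)) = s n i + lam)
    (hbest : ∀ n : ℕ, 3 ≤ n →
      (volume (convexHull ℝ
        (((Finset.Icc (1 : ℤ) (n : ℤ)).image fun i => x (s n i) : Finset (ℝ × ℝ)) :
          Set (ℝ × ℝ)))).toReal =
      sSup { A : ℝ | ∃ S : Finset (ℝ × ℝ), ↑S ⊆ frontier C ∧ S.card ≤ n ∧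
        A = (volume (convexHull ℝ (S : Set (ℝ × ℝ)))).toReal })
    (lamn : ℕ → ℤ → ℝ) (hlamn : ∀ n : ℕ, ∀ i : ℤ, lamn n i = s n i - s n (i - 1)) :
    ∃ A : ℝ, ∀ᶠ n : ℕ in atTop, ∀ i : ℤ,
      |lamn n i - lam / n + lam ^ 2 / (30 * (n : ℝ) ^ 3) * (∫ t in (0:ℝ)..lam, k t) -
        lam ^ 3 / (30 * (n : ℝ) ^ 3) * k (s n i)| ≤ A / (n : ℝ) ^ 4 := by
  obtain rfl : k = affineCurvature x := funext hk
  obtain rfl : lamn = fun n => gap (s n) := funext fun n => funext (hlamn n)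
  have hfr : range x ⊆ frontier C := (range_eq_image_Icc hlam hper).trans hbd |>.le
  have hloop : IsConvexLoop x lam := isConvexLoop_of_affineParametrization hlam
    (hx.of_le (by norm_num)) haff hper hinj hconv hcomp.isClosed hfr
  have hinscribed : ∀ᶠ n in atTop, IsBestInscribed x lam n (s n) := by
    filter_upwards [eventually_ge_atTop 3] with n hn
    have hpart := isCyclicPartition_of_forall_lt (by lia) (hs0 n hn) (hmono n hn) (hlast n hn)
      (hcyc n hn)
    exact isBestInscribed_of_hullArea_eq_sSup hcomp hconv.convex hper hfr hpart (by lia)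
      (hbest n hn)
  obtain ⟨A, hA⟩ :=
    (isBigO_gap_expansion_of_isBestInscribed hlam hx haff hloop hper hinscribed).bound
  refine ⟨A * lam ^ 4, (eventually_atTopUniform.mp hA).mono fun n hn i => (hn i).trans_eq ?_⟩
  rw [Real.norm_of_nonneg (by positivity), div_pow, mul_div_assoc]

theorem stmt_7 (x : ℝ → ℝ × ℝ) (lam : ℝ) (hlam : 0 < lam)
    (hx : ContDiff ℝ (⊤ : ℕ∞) x)
    (haff : ∀ t : ℝ, om (deriv x t) (iteratedDeriv 2 x t) = 1)
    (hper : ∀ t : ℝ, x (t + lam) = x t)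
    (hinj : Set.InjOn x (Set.Ico 0 lam))
    (C : Set (ℝ × ℝ)) (hC : C = convexHull ℝ (x '' Set.Icc 0 lam))
    (hcomp : IsCompact C) (hconv : StrictConvex ℝ C)
    (hbd : x '' Set.Icc 0 lam = frontier C)
    (k : ℝ → ℝ) (hk : ∀ t : ℝ, k t = om (iteratedDeriv 2 x t) (iteratedDeriv 3 x t))
    -- the vertex parameters of best approximating inscribed polygons
    (s : ℕ → ℤ → ℝ)
    (hs0 : ∀ n : ℕ, 3 ≤ n → 0 ≤ s n 1)
    (hmono : ∀ n : ℕ, 3 ≤ n → ∀ i : ℤ, 1 ≤ i → i < (n : ℤ) → s n i < s n (i + 1))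
    (hlast : ∀ n : ℕ, 3 ≤ n → s n (n : ℤ) < lam)
    (hcyc : ∀ n : ℕ, 3 ≤ n → ∀ i : ℤ, s n (i + (n : ℤ)) = s n i + lam)
    (hbest : ∀ n : ℕ, 3 ≤ n →
      (volume (convexHull ℝ
        (((Finset.Icc (1 : ℤ) (n : ℤ)).image fun i => x (s n i) : Finset (ℝ × ℝ)) :
          Set (ℝ × ℝ)))).toReal =
      sSup { A : ℝ | ∃ S : Finset (ℝ × ℝ), ↑S ⊆ frontier C ∧ S.card ≤ n ∧
        A = (volume (convexHull ℝ (S : Set (ℝ × ℝ)))).toReal })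
    -- the arc lengths λ_{n,i}
    (lamn : ℕ → ℤ → ℝ) (hlamn : ∀ n : ℕ, ∀ i : ℤ, lamn n i = s n i - s n (i - 1)) :
    -- conclusion: λ_{n,i} = λ/n − (λ²/(30n³))∫₀^λ k + (λ³/(30n³)) k(s_{n,i}) + o(1/n³)
    -- uniformly in i
    ∀ ε > (0 : ℝ), ∃ N : ℕ, ∀ n : ℕ, N ≤ n → ∀ i : ℤ, 1 ≤ i → i ≤ (n : ℤ) →
      (n : ℝ) ^ 3 *
        |lamn n i - lam / n + lam ^ 2 / (30 * (n : ℝ) ^ 3) * (∫ t in (0:ℝ)..lam, k t) -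
          lam ^ 3 / (30 * (n : ℝ) ^ 3) * k (s n i)| ≤ ε := by
  obtain ⟨A, hA⟩ := stmt_7_general x lam hlam (contDiff_infty.mp hx 6) haff hper hinj C hcomp
    hconv hbd k hk s hs0 hmono hlast hcyc hbest lamn hlamn
  intro ε hε
  have hsmall := (tendsto_const_div_atTop_nhds_zero_nat A).eventually_le_const hε
  obtain ⟨N, hN⟩ := eventually_atTop.mp (hA.and (hsmall.and (eventually_gt_atTop 0)))
  refine ⟨N, fun n hn i _ _ => ?_⟩
  obtain ⟨hbound, hle, hpos⟩ := hN n hn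
  calc _ ≤ (n : ℝ) ^ 3 * (A / (n : ℝ) ^ 4) := by gcongr; exact hbound i
    _ = A / n := by field_simp
    _ ≤ ε := hle
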